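/- arXiv:2408.00313 — 2 statements merged into one kernel-verified Lean document; each statement's English description precedes it below -/
import Mathlib

section
/- Criterion for the (2,5)-cuspidal edge: let f be a generalized timelike minimal surface with real Weierstrass data (g1, g2, ω1 du, ω2 dv) and let p be a non-degenerate ω-singular point with rank(df_p) = 1 and ω2(p) = 0 (so ω1(p) ≠ 0, (ω2)_v(p) ≠ 0 and g1(p)g2(p) ≠ 1). If f is not a front at p (equivalently (g2)_v(p) = 0), then f is A-equivalent at p to the (2,5)-cuspidal edge f_CE^{(2,5)}(u,v) = (u, v^2, v^5) at the origin if and only if the derivative of the function v ↦ (g2)_{vv}/(ω2)_v is nonzero at p, i.e. ((g2)_{vv}/(ω2)_v)_v(p) ≠ 0. -/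
noncomputable section

open Real Filter

abbrev R2 : Type := ℝ × ℝ
abbrev R3 : Type := ℝ × ℝ × ℝ

/-- The partial derivative in the `u`-direction. -/
def pu (f : R2 → R3) (p : R2) : R3 := fderiv ℝ f p (1, 0)
/-- The partial derivative in the `v`-direction. -/
def pv (f : R2 → R3) (p : R2) : R3 := fderiv ℝ f p (0, 1)

/-- Determinant of three column vectors in ℝ³. -/
def det3 (a b c : R3) : ℝ :=
  a.1 * (b.2.1 * c.2.2 - b.2.2 * c.2.1)
  - b.1 * (a.2.1 * c.2.2 - a.2.2 * c.2.1)
  + c.1 * (a.2.1 * b.2.2 - a.2.2 * b.2.1)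

/-- Determinant of two vectors in ℝ². -/
def det2 (a b : R2) : ℝ := a.1 * b.2 - a.2 * b.1

/-- Euclidean inner product on ℝ³. -/
def ip3 (a b : R3) : ℝ := a.1 * b.1 + a.2.1 * b.2.1 + a.2.2 * b.2.2

/-- `f : ℝ² → ℝ³ = 𝕃³` is the generalized timelike minimal surface with real Weierstrass
data `(g1, g2, w1 du, w2 dv)`: it is smooth, its partial derivatives are
`f_u = (ω1/2)·(-1-g1², 1-g1², 2g1)` and `f_v = (ω2/2)·(1+g2², 1-g2², -2g2)`
(which encodes the Weierstrass-type integral representation), and it is an immersion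
on an open dense set. -/
structure IsGTMS (f : R2 → R3) (g1 g2 w1 w2 : ℝ → ℝ) : Prop where
  smooth_f : ContDiff ℝ (⊤ : ℕ∞) f
  smooth_g1 : ContDiff ℝ (⊤ : ℕ∞) g1
  smooth_g2 : ContDiff ℝ (⊤ : ℕ∞) g2
  smooth_w1 : ContDiff ℝ (⊤ : ℕ∞) w1
  smooth_w2 : ContDiff ℝ (⊤ : ℕ∞) w2
  deriv_u : ∀ p : R2, pu f p =
    ((-1 - g1 p.1 ^ 2) * w1 p.1 / 2, (1 - g1 p.1 ^ 2) * w1 p.1 / 2, g1 p.1 * w1 p.1)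
  deriv_v : ∀ p : R2, pv f p =
    ((1 + g2 p.2 ^ 2) * w2 p.2 / 2, (1 - g2 p.2 ^ 2) * w2 p.2 / 2, -(g2 p.2 * w2 p.2))
  dense_immersion : Dense {p : R2 | Function.Injective (fderiv ℝ f p)}

/-- `Φ` is a germ of diffeomorphism at `p`. -/
def IsLocalDiffeoAt {E F : Type*} [NormedAddCommGroup E] [NormedSpace ℝ E]
    [NormedAddCommGroup F] [NormedSpace ℝ F] (Φ : E → F) (p : E) : Prop :=
  ∃ (U : Set E) (V : Set F) (Φinv : F → E),
    IsOpen U ∧ p ∈ U ∧ IsOpen V ∧ Φ p ∈ V ∧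
    ContDiffOn ℝ (⊤ : ℕ∞) Φ U ∧ ContDiffOn ℝ (⊤ : ℕ∞) Φinv V ∧
    Set.MapsTo Φ U V ∧ Set.MapsTo Φinv V U ∧
    (∀ x ∈ U, Φinv (Φ x) = x) ∧ (∀ y ∈ V, Φ (Φinv y) = y)

/-- 𝒜-equivalence of the germ of `f1` at `p1` and the germ of `f2` at `p2`. -/
def AEquiv (f1 : R2 → R3) (p1 : R2) (f2 : R2 → R3) (p2 : R2) : Prop :=
  ∃ (Φ : R2 → R2) (Ψ : R3 → R3),
    IsLocalDiffeoAt Φ p1 ∧ Φ p1 = p2 ∧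
    IsLocalDiffeoAt Ψ (f1 p1) ∧ Ψ (f1 p1) = f2 p2 ∧
    ∀ᶠ x in nhds p1, Ψ (f1 x) = f2 (Φ x)

/-- The canonical unit normal of a generalized timelike minimal surface. -/
def gtmsNormal (g1 g2 : ℝ → ℝ) (p : R2) : R3 :=
  (Real.sqrt ((1 - g1 p.1 * g2 p.2) ^ 2 + 2 * (g1 p.1 + g2 p.2) ^ 2))⁻¹ •
    (g1 p.1 + g2 p.2, -g1 p.1 + g2 p.2, 1 + g1 p.1 * g2 p.2)

/-- The signed area density function `λ = det(f_u, f_v, n)`. -/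
def areaDensity (f : R2 → R3) (g1 g2 : ℝ → ℝ) (p : R2) : ℝ :=
  det3 (pu f p) (pv f p) (gtmsNormal g1 g2 p)

/-- `f` is a front at `p`: the Legendrian lift `(f, n)` is an immersion at `p`,
where `n` is the canonical unit normal. -/
def IsFrontAt (f : R2 → R3) (g1 g2 : ℝ → ℝ) (p : R2) : Prop :=
  Function.Injective (fderiv ℝ (fun q => (f q, gtmsNormal g1 g2 q)) p)

/-- The differential of `f` at `p` has rank one. -/
def RankOne (f : R2 → R3) (p : R2) : Prop :=
  LinearMap.rank (fderiv ℝ f p).toLinearMap = 1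

/-- Directional derivative of `F` along the vector field `X`. -/
def vD (X : R2 → R2) (F : R2 → R3) : R2 → R3 := fun q => fderiv ℝ F q (X q)

/-- `φ_i = g_i' / (g_i² ω_i)`. -/
def phiW (g w : ℝ → ℝ) : ℝ → ℝ := fun t => deriv g t / (g t ^ 2 * w t)
/-- `Φ_i = (g_i/g_i') φ_i'`. -/
def PhiW (g w : ℝ → ℝ) : ℝ → ℝ := fun t => g t / deriv g t * deriv (phiW g w) t

/-- standard cuspidal butterfly -/
def fCBF : R2 → R3 := fun q =>
  (q.1, 5 * q.2 ^ 4 + 2 * q.1 * q.2, 4 * q.2 ^ 5 + q.1 * q.2 ^ 2 - q.1 ^ 2)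
/-- standard cuspidal S₁⁺ singularity -/
def fCS1p : R2 → R3 := fun q => (q.1, q.2 ^ 2, q.2 ^ 3 * (q.1 ^ 2 + q.2 ^ 2))
/-- standard cuspidal S₁⁻ singularity -/
def fCS1m : R2 → R3 := fun q => (q.1, q.2 ^ 2, q.2 ^ 3 * (q.1 ^ 2 - q.2 ^ 2))
/-- standard cuspidal edge -/
def fCE : R2 → R3 := fun q => (q.1, q.2 ^ 2, q.2 ^ 3)
/-- standard (2,5)-cuspidal edge -/
def fCE25 : R2 → R3 := fun q => (q.1, q.2 ^ 2, q.2 ^ 5)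
/-- standard cuspidal beaks -/
def fCBK : R2 → R3 := fun q =>
  (q.2, q.1 ^ 3 - q.1 * q.2 ^ 2, 3 * q.1 ^ 4 - 2 * q.1 ^ 2 * q.2 ^ 2)
/-- standard cuspidal lips -/
def fCLP : R2 → R3 := fun q =>
  (q.2, q.1 ^ 3 + q.1 * q.2 ^ 2, 3 * q.1 ^ 4 + 2 * q.1 ^ 2 * q.2 ^ 2)
/-- standard D₄⁺ singularity -/
def fD4p : R2 → R3 := fun q =>
  (q.1 * q.2, q.1 ^ 2 + 3 * q.2 ^ 2, q.1 ^ 2 * q.2 + q.2 ^ 3)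
/-- standard D₄⁻ singularity -/
def fD4m : R2 → R3 := fun q =>
  (q.1 * q.2, q.1 ^ 2 - 3 * q.2 ^ 2, q.1 ^ 2 * q.2 - q.2 ^ 3)

/-- Differentiating `s ↦ ∫₀¹ tᵏ φ(ts) dt` under the integral sign. -/
theorem hasDerivAt_integral_pow_mul_comp {φ : ℝ → ℝ} (hφ : ContDiff ℝ 1 φ) (k : ℕ) (s : ℝ) :
    HasDerivAt (fun s => ∫ t in (0 : ℝ)..1, t ^ k * φ (t * s))
      (∫ t in (0 : ℝ)..1, t ^ (k + 1) * deriv φ (t * s)) s := by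
  have hφc : Continuous φ := hφ.continuous
  have hφ'c : Continuous (deriv φ) := hφ.continuous_deriv le_rfl
  obtain ⟨C, hC⟩ := (isCompact_Icc (a := -(|s| + 1)) (b := |s| + 1)).exists_bound_of_continuousOn
    hφ'c.continuousOn
  refine (intervalIntegral.hasDerivAt_integral_of_dominated_loc_of_deriv_le
    (F := fun s t => t ^ k * φ (t * s)) (F' := fun s t => t ^ (k + 1) * deriv φ (t * s))
    (bound := fun _ => C) (s := Metric.ball s 1) (Metric.ball_mem_nhds s one_pos)
    (Eventually.of_forall fun x => ?_) ?_ ?_ ?_ ?_ ?_).2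
  · exact (by fun_prop : Continuous fun t => t ^ k * φ (t * x)).aestronglyMeasurable
  · exact (by fun_prop : Continuous fun t => t ^ k * φ (t * s)).intervalIntegrable _ _
  · exact (by fun_prop : Continuous fun t => t ^ (k + 1) * deriv φ (t * s)).aestronglyMeasurable
  · refine Eventually.of_forall fun t ht x hx => ?_
    rw [Set.uIoc_of_le zero_le_one] at ht
    have hx' : |x| ≤ |s| + 1 := by
      have h1 : |x - s| < 1 := hx
      have h2 := abs_sub_abs_le_abs_sub x s
      linarith
    have htx : |t * x| ≤ |s| + 1 := by
      rw [abs_mul, abs_of_pos ht.1]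
      nlinarith [abs_nonneg x, ht.2]
    have h1 := hC (t * x) (abs_le.1 htx)
    rw [norm_mul, norm_pow, Real.norm_of_nonneg ht.1.le]
    calc t ^ (k + 1) * ‖deriv φ (t * x)‖ ≤ 1 * ‖deriv φ (t * x)‖ := by
          gcongr; exact pow_le_one₀ ht.1.le ht.2
      _ ≤ C := by simpa using h1
  · exact continuous_const.intervalIntegrable _ _
  · refine Eventually.of_forall fun t _ x _ => ?_
    have h1 : HasDerivAt φ (deriv φ (t * x)) (t * x) :=
      (hφ.differentiable one_ne_zero _).hasDerivAt
    have h2 : HasDerivAt (fun x => t * x) t x := by simpa using (hasDerivAt_id x).const_mul t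
    have h3 := (h1.comp x h2).const_mul (t ^ k)
    exact h3.congr_deriv (by ring)

theorem contDiff_integral_pow_mul_comp {φ : ℝ → ℝ} (hφ : ContDiff ℝ (⊤ : ℕ∞) φ) (k : ℕ) :
    ContDiff ℝ (⊤ : ℕ∞) (fun s => ∫ t in (0 : ℝ)..1, t ^ k * φ (t * s)) := by
  rw [contDiff_infty]
  intro n
  induction n generalizing φ k with
  | zero =>
    refine contDiff_zero.2 (continuous_iff_continuousAt.2 fun s => ?_)
    exact (hasDerivAt_integral_pow_mul_comp (hφ.of_le (by exact_mod_cast le_top)) k s).continuousAt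
  | succ n ih =>
    have h := hasDerivAt_integral_pow_mul_comp (hφ.of_le (by exact_mod_cast le_top)) k
    push_cast
    rw [contDiff_succ_iff_deriv]
    refine ⟨fun s => (h s).differentiableAt, by simp, ?_⟩
    rw [show deriv _ = _ from funext fun s => (h s).deriv]
    exact ih (contDiff_infty_iff_deriv.1 hφ).2 (k + 1)

/-- Hadamard's lemma: a primitive of `xⁿ φ` vanishing at `0` is `xⁿ⁺¹` times a smooth function. -/
theorem exists_eq_pow_mul_of_hasDerivAt {b φ : ℝ → ℝ} {n : ℕ} (hφ : ContDiff ℝ (⊤ : ℕ∞) φ)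
    (hb : ∀ x, HasDerivAt b (x ^ n * φ x) x) (hb0 : b 0 = 0) :
    ∃ ψ : ℝ → ℝ, ContDiff ℝ (⊤ : ℕ∞) ψ ∧ (∀ x, b x = x ^ (n + 1) * ψ x) ∧
      ψ 0 = φ 0 / (n + 1) := by
  refine ⟨_, contDiff_integral_pow_mul_comp hφ n, fun x => ?_, ?_⟩
  · have hφc : Continuous φ := hφ.continuous
    have h1 : ∀ t ∈ Set.uIcc (0 : ℝ) 1,
        HasDerivAt (fun t => b (t * x)) (x ^ (n + 1) * (t ^ n * φ (t * x))) t := fun t _ => by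
      have h2 : HasDerivAt (fun t => t * x) x t := by simpa using (hasDerivAt_id t).mul_const x
      exact ((hb (t * x)).comp t h2).congr_deriv (by ring)
    have h2 := intervalIntegral.integral_eq_sub_of_hasDerivAt h1
      ((by fun_prop : Continuous fun t => x ^ (n + 1) * (t ^ n * φ (t * x))).intervalIntegrable 0 1)
    rw [intervalIntegral.integral_const_mul] at h2
    simp [h2, hb0]
  · simp [intervalIntegral.integral_mul_const, integral_pow]
    field_simp

theorem exists_eq_mul_of_contDiff {b : ℝ → ℝ} (hb : ContDiff ℝ (⊤ : ℕ∞) b) (hb0 : b 0 = 0) :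
    ∃ ψ : ℝ → ℝ, ContDiff ℝ (⊤ : ℕ∞) ψ ∧ (∀ x, b x = x * ψ x) ∧ ψ 0 = deriv b 0 := by
  have h := contDiff_infty_iff_deriv.1 hb
  obtain ⟨ψ, h1, h2, h3⟩ := exists_eq_pow_mul_of_hasDerivAt (n := 0) h.2
    (fun x => by simpa using (h.1 x).hasDerivAt) hb0
  exact ⟨ψ, h1, by simpa using h2, by simpa using h3⟩

theorem iteratedDeriv_succ_id_mul {φ : ℝ → ℝ} (hφ : ContDiff ℝ (⊤ : ℕ∞) φ) (n : ℕ) (x : ℝ) :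
    iteratedDeriv (n + 1) (fun x => x * φ x) x =
      x * iteratedDeriv (n + 1) φ x + (n + 1) * iteratedDeriv n φ x := by
  have hd : ∀ m x, HasDerivAt (iteratedDeriv m φ) (iteratedDeriv (m + 1) φ x) x := fun m x => by
    rw [iteratedDeriv_succ]
    exact (hφ.differentiable_iteratedDeriv m (by exact_mod_cast ENat.natCast_lt_top m) x).hasDerivAt
  induction n generalizing x with
  | zero =>
    have h := (hasDerivAt_id x).mul (hd 0 x)
    simp only [iteratedDeriv_zero, zero_add] at h ⊢
    rw [iteratedDeriv_one (f := fun x => x * φ x)]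
    refine h.deriv.trans ?_
    simp; ring
  | succ n ih =>
    rw [iteratedDeriv_succ, funext ih]
    have h := ((hasDerivAt_id x).mul (hd (n + 1) x)).add ((hd n x).const_mul ((n : ℝ) + 1))
    refine h.deriv.trans ?_
    push_cast
    simp; ring

/-- Borel's lemma. -/
theorem exists_contDiff_iteratedDeriv_eq (c : ℕ → ℝ) :
    ∃ F : ℝ → ℝ, ContDiff ℝ (⊤ : ℕ∞) F ∧ ∀ k, iteratedDeriv k F 0 = c k := by
  let χ : ContDiffBump (0 : ℝ) := ⟨1, 2, one_pos, one_lt_two⟩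
  let ψ : ℕ → ℝ → ℝ := fun i y => y ^ i * χ y
  have hψ : ∀ i, ContDiff ℝ (⊤ : ℕ∞) (ψ i) := fun i => (contDiff_id.pow i).mul χ.contDiff
  have hψs : ∀ i, HasCompactSupport (ψ i) := fun i => χ.hasCompactSupport.mul_left
  have hbound : ∀ k i, ∃ C, ∀ x, ‖iteratedFDeriv ℝ k (ψ i) x‖ ≤ C := fun k i =>
    ((hψ i).continuous_iteratedFDeriv (m := k)
      (by exact_mod_cast le_top)).bounded_above_of_compact_support ((hψs i).iteratedFDeriv k)
  choose B hB using hbound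
  have hB0 : ∀ k i, 0 ≤ B k i := fun k i => (norm_nonneg _).trans (hB k i 0)
  let a : ℕ → ℝ := fun i => c i / i.factorial
  let l : ℕ → ℝ := fun i => 1 + 2 ^ i * |a i| * ∑ k ∈ Finset.range i, B k i
  have hl : ∀ i, 1 ≤ l i := fun i => by
    have : 0 ≤ ∑ k ∈ Finset.range i, B k i := Finset.sum_nonneg fun k _ => hB0 k i
    have : 0 ≤ 2 ^ i * |a i| * ∑ k ∈ Finset.range i, B k i := by positivity
    simp only [l]; linarith
  let F : ℕ → ℝ → ℝ := fun i x => (a i / l i ^ i) * ψ i (l i * x)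
  have hF : ∀ i, ContDiff ℝ (⊤ : ℕ∞) (F i) := fun i =>
    contDiff_const.mul ((hψ i).comp (contDiff_const.mul contDiff_id))
  have hFd : ∀ k i x, iteratedDeriv k (F i) x =
      (a i / l i ^ i) * (l i ^ k * iteratedDeriv k (ψ i) (l i * x)) := fun k i x => by
    have h1 : ContDiff ℝ k (ψ i) := (hψ i).of_le (by exact_mod_cast le_top)
    simp only [F]
    rw [iteratedDeriv_const_mul_field, iteratedDeriv_comp_const_mul h1]
  let v : ℕ → ℕ → ℝ := fun k i => if k < i then (1 / 2) ^ i else |a i| / l i ^ i * (l i ^ k * B k i)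
  have hv : ∀ k, Summable (v k) := fun k => by
    rw [← summable_nat_add_iff (k + 1)]
    refine ((summable_nat_add_iff (k + 1)).2 summable_geometric_two).congr fun i => ?_
    simp only [v]
    rw [if_pos (by omega)]
  have hFv : ∀ k i x, ‖iteratedFDeriv ℝ k (F i) x‖ ≤ v k i := fun k i x => by
    have hl0 : 0 < l i := one_pos.trans_le (hl i)
    have h1 : ‖iteratedDeriv k (ψ i) (l i * x)‖ ≤ B k i := by
      rw [← norm_iteratedFDeriv_eq_norm_iteratedDeriv]; exact hB k i _
    have h2 : ‖iteratedDeriv k (F i) x‖ ≤ |a i| / l i ^ i * (l i ^ k * B k i) := by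
      rw [hFd, norm_mul, norm_mul, norm_div, norm_pow, norm_pow, Real.norm_of_nonneg hl0.le,
        Real.norm_eq_abs (a i)]
      gcongr
    rw [norm_iteratedFDeriv_eq_norm_iteratedDeriv]
    refine h2.trans ?_
    simp only [v]
    split_ifs with hki
    · have h3 : l i ^ k * l i ≤ l i ^ i := by
        rw [← pow_succ]; exact pow_le_pow_right₀ (hl i) hki
      have h4 : B k i ≤ ∑ k ∈ Finset.range i, B k i :=
        Finset.single_le_sum (f := fun k => B k i) (fun k _ => hB0 k i) (Finset.mem_range.2 hki)
      have h5 : 2 ^ i * (|a i| * B k i) ≤ l i := by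
        have : 2 ^ i * |a i| * B k i ≤ 2 ^ i * |a i| * ∑ k ∈ Finset.range i, B k i := by gcongr
        simp only [l]; linarith
      rw [one_div, inv_pow, ← one_div, div_mul_eq_mul_div, div_le_div_iff₀ (by positivity)
        (by positivity), one_mul]
      calc |a i| * (l i ^ k * B k i) * 2 ^ i = l i ^ k * (2 ^ i * (|a i| * B k i)) := by ring
        _ ≤ l i ^ k * l i := by gcongr
        _ ≤ l i ^ i := h3
    · exact le_rfl
  have hψ0 : ∀ k i, iteratedDeriv k (ψ i) 0 = if k = i then (i.factorial : ℝ) else 0 := by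
    intro k i
    have h1 : ψ i =ᶠ[nhds 0] fun y => y ^ i := by
      filter_upwards [χ.eventuallyEq_one] with y hy
      simp [ψ, hy]
    rw [h1.iteratedDeriv_eq, iteratedDeriv_fun_pow_zero]
    push_cast; rfl
  refine ⟨fun x => ∑' i, F i x, contDiff_tsum (N := ⊤) hF (fun k _ => hv k)
    (fun k i x _ => hFv k i x), fun k => ?_⟩
  have h1 := iteratedFDeriv_tsum_apply (N := ⊤) hF (fun k _ => hv k) (fun k i x _ => hFv k i x)
    (k := k) le_top (0 : ℝ)
  have h2 : Summable fun i => iteratedFDeriv ℝ k (F i) 0 :=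
    Summable.of_norm_bounded (hv k) fun i => hFv k i 0
  rw [iteratedDeriv_eq_iteratedFDeriv, h1, ContinuousMultilinearMap.tsum_eval h2]
  simp_rw [← iteratedDeriv_eq_iteratedFDeriv]
  rw [tsum_eq_single k]
  · have hl0 : l k ≠ 0 := (one_pos.trans_le (hl k)).ne'
    have := Nat.factorial_ne_zero k
    rw [hFd, mul_zero, hψ0, if_pos rfl]
    simp only [a]
    field_simp
  · intro i hi
    rw [hFd, mul_zero, hψ0, if_neg hi.symm]
    simp

theorem iteratedDeriv_add_two_comp_sq {β : ℝ → ℝ} (hβ : ContDiff ℝ (⊤ : ℕ∞) β) (n : ℕ) :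
    iteratedDeriv (n + 2) (fun s => β (s ^ 2)) 0 =
      2 * (n + 1) * iteratedDeriv n (fun s => deriv β (s ^ 2)) 0 := by
  have hd := contDiff_infty_iff_deriv.1 hβ
  have h1 : deriv (fun s => β (s ^ 2)) = fun s => s * (2 * deriv β (s ^ 2)) := funext fun s => by
    have h := (hd.1 (s ^ 2)).hasDerivAt.comp s (hasDerivAt_pow 2 s)
    refine h.deriv.trans ?_
    push_cast; ring
  have h2 : ContDiff ℝ (⊤ : ℕ∞) fun s => 2 * deriv β (s ^ 2) :=
    contDiff_const.mul (hd.2.comp (contDiff_id.pow 2))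
  rw [iteratedDeriv_succ', h1, iteratedDeriv_succ_id_mul h2, zero_mul,
    iteratedDeriv_const_mul_field]
  ring

theorem iteratedDeriv_odd_comp_sq {β : ℝ → ℝ} (hβ : ContDiff ℝ (⊤ : ℕ∞) β) (n : ℕ) :
    iteratedDeriv (2 * n + 1) (fun s => β (s ^ 2)) 0 = 0 := by
  induction n generalizing β with
  | zero =>
    have h := ((contDiff_infty_iff_deriv.1 hβ).1 ((0 : ℝ) ^ 2)).hasDerivAt.comp (0 : ℝ)
      (hasDerivAt_pow 2 (0 : ℝ))
    rw [mul_zero, zero_add, iteratedDeriv_one]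
    exact h.deriv.trans (by simp)
  | succ n ih =>
    rw [show 2 * (n + 1) + 1 = (2 * n + 1) + 2 by ring, iteratedDeriv_add_two_comp_sq hβ,
      ih (contDiff_infty_iff_deriv.1 hβ).2, mul_zero]

theorem exists_iteratedDeriv_even_comp_sq (n : ℕ) :
    ∃ κ : ℝ, κ ≠ 0 ∧ ∀ β : ℝ → ℝ, ContDiff ℝ (⊤ : ℕ∞) β →
      iteratedDeriv (2 * n) (fun s => β (s ^ 2)) 0 = κ * iteratedDeriv n β 0 := by
  induction n with
  | zero => exact ⟨1, one_ne_zero, fun β _ => by simp⟩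
  | succ n ih =>
    obtain ⟨κ, hκ, h⟩ := ih
    refine ⟨2 * (2 * n + 1) * κ, by positivity, fun β hβ => ?_⟩
    rw [show 2 * (n + 1) = 2 * n + 2 by ring, iteratedDeriv_add_two_comp_sq hβ,
      h _ (contDiff_infty_iff_deriv.1 hβ).2, iteratedDeriv_succ']
    push_cast; ring

/-- A function flat at `0` remains smooth after composition with the square root. -/
theorem contDiff_comp_sqrt_of_flat {g : ℝ → ℝ} (hg : ContDiff ℝ (⊤ : ℕ∞) g)
    (hflat : ∀ n, iteratedDeriv n g 0 = 0) : ContDiff ℝ (⊤ : ℕ∞) fun t => g √t := by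
  have key : ∀ g : ℝ → ℝ, ContDiff ℝ (⊤ : ℕ∞) g → (∀ n, iteratedDeriv n g 0 = 0) →
      ∃ k : ℝ → ℝ, ContDiff ℝ (⊤ : ℕ∞) k ∧ (∀ n, iteratedDeriv n k 0 = 0) ∧
        ∀ t, HasDerivAt (fun t => g √t) (k √t) t := by
    intro g hg hflat
    have hd := contDiff_infty_iff_deriv.1 hg
    have hg0 : g 0 = 0 := by simpa using hflat 0
    have hg1 : deriv g 0 = 0 := by simpa using hflat 1
    obtain ⟨k, hk, hkg, -⟩ := exists_eq_mul_of_contDiff hd.2 hg1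
    have hkflat : ∀ n, iteratedDeriv n k 0 = 0 := fun n => by
      have h1 := hflat (n + 2)
      rw [iteratedDeriv_succ', funext hkg, iteratedDeriv_succ_id_mul hk, zero_mul, zero_add] at h1
      exact (mul_eq_zero.1 h1).resolve_left (by positivity)
    have hk0 : k 0 = 0 := by simpa using hkflat 0
    refine ⟨fun s => 1 / 2 * k s, contDiff_const.mul hk, fun n => ?_, fun t => ?_⟩
    · rw [iteratedDeriv_const_mul_field, hkflat, mul_zero]
    change HasDerivAt _ (1 / 2 * k √t) t
    rcases lt_trichotomy t 0 with ht | rfl | ht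
    · rw [Real.sqrt_eq_zero_of_nonpos ht.le, hk0, mul_zero]
      refine (hasDerivAt_const t (0 : ℝ)).congr_of_eventuallyEq ?_
      filter_upwards [Iio_mem_nhds ht] with x hx
      rw [Real.sqrt_eq_zero_of_nonpos (le_of_lt hx), hg0]
    · obtain ⟨m, hm, hmg, hm0⟩ := exists_eq_pow_mul_of_hasDerivAt (n := 1) hk
        (fun x => by simpa [hkg] using (hd.1 x).hasDerivAt) hg0
      rw [hk0, zero_div] at hm0
      rw [Real.sqrt_zero, hk0, mul_zero, hasDerivAt_iff_isLittleO]
      simp only [Real.sqrt_zero, hg0, sub_zero, smul_zero]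
      have h1 : Tendsto (fun t => m √t) (nhds 0) (nhds 0) := by
        have := (hm.continuous.comp Real.continuous_sqrt).tendsto 0
        simpa [hm0, Function.comp_def] using this
      have h2 : (fun t => m √t) =o[nhds 0] fun _ => (1 : ℝ) := (Asymptotics.isLittleO_one_iff ℝ).2 h1
      have h3 : (fun t => √t ^ 2) =O[nhds 0] fun t : ℝ => t := by
        refine Asymptotics.isBigO_of_le _ fun t => ?_
        rcases le_total t 0 with ht | ht
        · simp [Real.sqrt_eq_zero_of_nonpos ht]
        · rw [Real.sq_sqrt ht]
      simpa [hmg] using h3.mul_isLittleO h2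
    · have h := (hd.1 (√t)).hasDerivAt.comp t (Real.hasDerivAt_sqrt ht.ne')
      refine h.congr_deriv ?_
      have : √t ≠ 0 := (Real.sqrt_pos.2 ht).ne'
      rw [hkg]
      field_simp
  rw [contDiff_infty]
  intro n
  induction n generalizing g with
  | zero => exact contDiff_zero.2 (hg.continuous.comp Real.continuous_sqrt)
  | succ n ih =>
    obtain ⟨k, hk, hkflat, h⟩ := key g hg hflat
    push_cast
    rw [contDiff_succ_iff_deriv]
    refine ⟨fun s => (h s).differentiableAt, by simp, ?_⟩
    rw [show deriv _ = _ from funext fun s => (h s).deriv]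
    exact ih hk hkflat

/-- Whitney's theorem on even functions, in the form of a decomposition of a smooth function into
its even and odd part. -/
theorem exists_eq_comp_sq_add_mul_comp_sq {f : ℝ → ℝ} (hf : ContDiff ℝ (⊤ : ℕ∞) f) :
    ∃ P Q : ℝ → ℝ, ContDiff ℝ (⊤ : ℕ∞) P ∧ ContDiff ℝ (⊤ : ℕ∞) Q ∧
      ∀ s, f s = P (s ^ 2) + s * Q (s ^ 2) := by
  choose κ hκ hκe using exists_iteratedDeriv_even_comp_sq
  obtain ⟨P, hP, hPd⟩ := exists_contDiff_iteratedDeriv_eq fun n => iteratedDeriv (2 * n) f 0 / κ n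
  obtain ⟨Q, hQ, hQd⟩ := exists_contDiff_iteratedDeriv_eq
    fun n => iteratedDeriv (2 * n + 1) f 0 / ((2 * n + 1) * κ n)
  have hsq : ∀ {β : ℝ → ℝ}, ContDiff ℝ (⊤ : ℕ∞) β → ContDiff ℝ (⊤ : ℕ∞) fun s => β (s ^ 2) :=
    fun hβ => hβ.comp (contDiff_id.pow 2)
  have hsQ : ContDiff ℝ (⊤ : ℕ∞) fun s => s * Q (s ^ 2) := contDiff_id.mul (hsq hQ)
  have hat : ∀ {h : ℝ → ℝ} (n : ℕ), ContDiff ℝ (⊤ : ℕ∞) h → ContDiffAt ℝ n h 0 :=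
    fun n hh => (hh.of_le (by exact_mod_cast le_top)).contDiffAt
  let g : ℝ → ℝ := fun s => f s - (P (s ^ 2) + s * Q (s ^ 2))
  have hg : ContDiff ℝ (⊤ : ℕ∞) g := hf.sub ((hsq hP).add hsQ)
  have hgflat : ∀ n, iteratedDeriv n g 0 = 0 := fun n => by
    have h1 : iteratedDeriv n g 0 = iteratedDeriv n f 0 -
        (iteratedDeriv n (fun s => P (s ^ 2)) 0 + iteratedDeriv n (fun s => s * Q (s ^ 2)) 0) := by
      rw [← iteratedDeriv_fun_add (hat n (hsq hP)) (hat n hsQ),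
        ← iteratedDeriv_fun_sub (hat n hf) (hat n ((hsq hP).add hsQ))]
    rw [h1]
    obtain ⟨m, rfl | rfl⟩ := Nat.even_or_odd' n
    · have h2 : iteratedDeriv (2 * m) (fun s => s * Q (s ^ 2)) 0 = 0 := by
        cases m with
        | zero => simp
        | succ m =>
          rw [show 2 * (m + 1) = 2 * m + 1 + 1 by ring, iteratedDeriv_succ_id_mul (hsq hQ),
            iteratedDeriv_odd_comp_sq hQ]
          simp
      rw [h2, hκe m P hP, hPd, mul_div_cancel₀ _ (hκ m)]
      ring
    · rw [iteratedDeriv_odd_comp_sq hP, iteratedDeriv_succ_id_mul (hsq hQ), hκe m Q hQ, hQd]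
      have := hκ m
      have h3 : (2 * (m : ℝ) + 1) ≠ 0 := by positivity
      push_cast
      field_simp
      ring
  have hgn : ContDiff ℝ (⊤ : ℕ∞) fun s => g (-s) := hg.comp contDiff_neg
  have hgnflat : ∀ n, iteratedDeriv n (fun s => g (-s)) 0 = 0 := fun n => by
    rw [iteratedDeriv_comp_neg, neg_zero, hgflat, smul_zero]
  have heflat : ∀ n, iteratedDeriv n (fun s => 1 / 2 * (g s + g (-s))) 0 = 0 := fun n => by
    rw [iteratedDeriv_const_mul_field, iteratedDeriv_fun_add (hat n hg) (hat n hgn), hgflat,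
      hgnflat, add_zero, mul_zero]
  have hoflat : ∀ n, iteratedDeriv n (fun s => 1 / 2 * (g s - g (-s))) 0 = 0 := fun n => by
    rw [iteratedDeriv_const_mul_field, iteratedDeriv_fun_sub (hat n hg) (hat n hgn), hgflat,
      hgnflat, sub_zero, mul_zero]
  obtain ⟨q, hq, hqo, -⟩ := exists_eq_mul_of_contDiff
    (contDiff_const.mul (hg.sub hgn) : ContDiff ℝ (⊤ : ℕ∞) fun s => 1 / 2 * (g s - g (-s)))
    (by simp)
  have hqflat : ∀ n, iteratedDeriv n q 0 = 0 := fun n => by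
    have h1 := hoflat (n + 1)
    rw [funext hqo, iteratedDeriv_succ_id_mul hq, zero_mul, zero_add] at h1
    exact (mul_eq_zero.1 h1).resolve_left (by positivity)
  have hqeven : ∀ s, q (-s) = q s := fun s => by
    rcases eq_or_ne s 0 with rfl | hs
    · simp
    · have h1 := hqo s
      have h2 := hqo (-s)
      rw [neg_neg] at h2
      exact mul_left_cancel₀ hs (by linarith)
  refine ⟨fun y => P y + 1 / 2 * (g √y + g (-√y)), fun y => Q y + q √y,
    hP.add (contDiff_comp_sqrt_of_flat (contDiff_const.mul (hg.add hgn)) heflat),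
    hQ.add (contDiff_comp_sqrt_of_flat hq hqflat), fun s => ?_⟩
  have h1 : f s = P (s ^ 2) + s * Q (s ^ 2) + g s := by simp only [g]; ring
  have h2 := hqo s
  simp only [Real.sqrt_sq_eq_abs]
  rcases abs_choice s with hs | hs <;> rw [hs]
  · rw [h1]; linarith
  · rw [h1, hqeven, neg_neg]; linarith

/-- The inverse function theorem for smooth germs. -/
theorem isLocalDiffeoAt_of_hasFDerivAt {E F : Type*} [NormedAddCommGroup E] [NormedSpace ℝ E]
    [CompleteSpace E] [NormedAddCommGroup F] [NormedSpace ℝ F] {Φ : E → F} {U : Set E} {p : E}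
    (hU : IsOpen U) (hp : p ∈ U) (hΦ : ContDiffOn ℝ (⊤ : ℕ∞) Φ U) {e : E ≃L[ℝ] F}
    (he : HasFDerivAt Φ (e : E →L[ℝ] F) p) : IsLocalDiffeoAt Φ p := by
  have hat : ∀ x ∈ U, ContDiffAt ℝ (⊤ : ℕ∞) Φ x := fun x hx => hΦ.contDiffAt (hU.mem_nhds hx)
  let G := (hat p hp).toOpenPartialHomeomorph Φ he (by simp)
  have hGΦ : ∀ x, G x = Φ x := fun x => rfl
  have hpG : p ∈ G.source := (hat p hp).mem_toOpenPartialHomeomorph_source he (by simp)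
  let U' : Set E := U ∩ fderiv ℝ Φ ⁻¹' Set.range ((↑) : (E ≃L[ℝ] F) → E →L[ℝ] F)
  have hU' : IsOpen U' := (hΦ.continuousOn_fderiv_of_isOpen hU (by simp)).isOpen_inter_preimage hU
    ContinuousLinearEquiv.isOpen
  let G' := G.restrOpen U' hU'
  have hs : G'.source = G.source ∩ U' := by simp [G']
  refine ⟨G'.source, G'.target, G'.symm, G'.open_source, ?_, G'.open_target, ?_, ?_, ?_,
    G'.mapsTo, G'.symm.mapsTo, fun x hx => G'.left_inv hx, fun y hy => G'.right_inv hy⟩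
  · rw [hs]
    exact ⟨hpG, hp, e, he.fderiv.symm⟩
  · refine G'.map_source (x := p) ?_
    rw [hs]
    exact ⟨hpG, hp, e, he.fderiv.symm⟩
  · refine hΦ.mono ?_
    rw [hs]
    exact fun x hx => hx.2.1
  · intro y hy
    have h1 : G'.symm y ∈ G.source ∩ U' := hs ▸ G'.map_target hy
    obtain ⟨-, h2, e', he'⟩ := h1
    refine (G'.contDiffAt_symm (f₀' := e') hy ?_ (hat _ h2)).contDiffWithinAt
    rw [he']
    exact ((hat _ h2).differentiableAt (by simp)).hasFDerivAt

theorem exists_contDiff_eventuallyEq {φ : ℝ → ℝ} {U : Set ℝ} {a : ℝ} (hU : IsOpen U) (ha : a ∈ U)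
    (hφ : ContDiffOn ℝ (⊤ : ℕ∞) φ U) :
    ∃ ψ : ℝ → ℝ, ContDiff ℝ (⊤ : ℕ∞) ψ ∧ ψ =ᶠ[nhds a] φ := by
  obtain ⟨r, hr, hrU⟩ := Metric.nhds_basis_closedBall.mem_iff.1 (hU.mem_nhds ha)
  let χ : ContDiffBump a := ⟨r / 2, r, half_pos hr, half_lt_self hr⟩
  refine ⟨fun x => χ x * φ x, contDiff_iff_contDiffAt.2 fun x => ?_, ?_⟩
  · by_cases hx : x ∈ U
    · exact χ.contDiffAt.mul (hφ.contDiffAt (hU.mem_nhds hx))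
    · have h1 : x ∉ tsupport χ := by
        rw [χ.tsupport_eq]
        exact fun h => hx (hrU h)
      refine (contDiffAt_const (c := (0 : ℝ))).congr_of_eventuallyEq ?_
      filter_upwards [notMem_tsupport_iff_eventuallyEq.1 h1] with y hy
      simp [hy]
  · filter_upwards [χ.eventuallyEq_one] with x hx
    simp [hx]

theorem deriv_deriv_sq_mul {F G : ℝ → ℝ} (hG : ContDiff ℝ (⊤ : ℕ∞) G)
    (hF : ∀ x, F x = x ^ 2 * G x) :
    deriv (deriv F) 0 = 2 * G 0 ∧ HasDerivAt (deriv (deriv F)) (6 * deriv G 0) 0 := by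
  have h0 := contDiff_infty_iff_deriv.1 hG
  have h1 := contDiff_infty_iff_deriv.1 h0.2
  have h2 := contDiff_infty_iff_deriv.1 h1.2
  have e1 : deriv F = fun x => 2 * x * G x + x ^ 2 * deriv G x := funext fun x => by
    rw [funext hF]
    refine ((hasDerivAt_pow 2 x).mul (h0.1 x).hasDerivAt).deriv.trans ?_
    push_cast; ring
  have e2 : deriv (deriv F) =
      fun x => 2 * G x + 4 * x * deriv G x + x ^ 2 * deriv (deriv G) x := funext fun x => by
    rw [e1]
    refine ((((hasDerivAt_id x).const_mul 2).mul (h0.1 x).hasDerivAt).add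
      ((hasDerivAt_pow 2 x).mul (h1.1 x).hasDerivAt)).deriv.trans ?_
    simp only [id]
    push_cast; ring
  refine ⟨by simp [e2], ?_⟩
  rw [e2]
  refine ((((h0.1 0).hasDerivAt.const_mul 2).add
    (((hasDerivAt_id (0 : ℝ)).const_mul 4).mul (h1.1 0).hasDerivAt)).add
    ((hasDerivAt_pow 2 (0 : ℝ)).mul (h2.1 0).hasDerivAt)).congr_deriv ?_
  simp only [id]
  push_cast; ring

/-- Normal form of the space curve `(∫ w, ∫ w h, ∫ w h² / 2)` at a simple zero of `w` which is a
double zero of `h`. -/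
theorem exists_curve_normal_form {w h b0 b1 b2 : ℝ → ℝ} (hw : ContDiff ℝ (⊤ : ℕ∞) w)
    (hh : ContDiff ℝ (⊤ : ℕ∞) h) (hw0 : w 0 = 0) (hw1 : deriv w 0 ≠ 0) (hh0 : h 0 = 0)
    (hh1 : deriv h 0 = 0) (hb0 : ∀ x, HasDerivAt b0 (w x) x) (hb00 : b0 0 = 0)
    (hb1 : ∀ x, HasDerivAt b1 (w x * h x) x) (hb10 : b1 0 = 0)
    (hb2 : ∀ x, HasDerivAt b2 (w x * h x ^ 2 / 2) x) (hb20 : b2 0 = 0) :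
    ∃ (σ P Q R S : ℝ → ℝ) (ε m : ℝ), IsLocalDiffeoAt σ 0 ∧ σ 0 = 0 ∧ ε ≠ 0 ∧
      ContDiff ℝ (⊤ : ℕ∞) P ∧ ContDiff ℝ (⊤ : ℕ∞) Q ∧ ContDiff ℝ (⊤ : ℕ∞) R ∧
      ContDiff ℝ (⊤ : ℕ∞) S ∧
      (∀ᶠ x in nhds 0, b0 x = ε * σ x ^ 2 ∧
        b1 x = m * σ x ^ 4 + σ x ^ 6 * P (σ x ^ 2) + σ x ^ 5 * Q (σ x ^ 2) ∧
        b2 x = σ x ^ 6 * R (σ x ^ 2) + σ x ^ 7 * S (σ x ^ 2)) ∧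
      (Q 0 ≠ 0 ↔ deriv (fun x => deriv (deriv h) x / deriv w x) 0 ≠ 0) := by
  obtain ⟨W, hW, hwW, hW0⟩ := exists_eq_mul_of_contDiff hw hw0
  have hhd := contDiff_infty_iff_deriv.1 hh
  obtain ⟨φ, hφ, hhφ, -⟩ := exists_eq_mul_of_contDiff hhd.2 hh1
  obtain ⟨H, hH, hhH, -⟩ := exists_eq_pow_mul_of_hasDerivAt (n := 1) hφ
    (fun x => by simpa [hhφ] using (hhd.1 x).hasDerivAt) hh0
  obtain ⟨C, hC, hbC, hC0⟩ := exists_eq_pow_mul_of_hasDerivAt (n := 1) hW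
    (fun x => by simpa [hwW] using hb0 x) hb00
  norm_num at hhH hbC hC0
  have hC0' : C 0 ≠ 0 := by rw [hC0, hW0]; exact div_ne_zero hw1 two_ne_zero
  obtain ⟨K, hK, hDK, hK0⟩ := exists_eq_mul_of_contDiff
    (hH.sub (contDiff_const.mul hC) : ContDiff ℝ (⊤ : ℕ∞) fun x => H x - H 0 / C 0 * C x)
    (by field_simp; simp)
  have hK0' : K 0 = deriv H 0 - H 0 / C 0 * deriv C 0 := by
    rw [hK0]
    exact (((contDiff_infty_iff_deriv.1 hH).1 0).hasDerivAt.sub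
      (((contDiff_infty_iff_deriv.1 hC).1 0).hasDerivAt.const_mul _)).deriv
  obtain ⟨ρ, hρ, hrρ, hρ0⟩ := exists_eq_pow_mul_of_hasDerivAt (n := 4) (hW.mul hK)
    (b := fun x => b1 x - H 0 / (2 * C 0) * b0 x ^ 2) (fun x => by
      refine ((hb1 x).sub (((hb0 x).pow 2).const_mul _)).congr_deriv ?_
      have h1 := hDK x
      simp only [hbC, hwW, hhH]
      have h2 : H x = H 0 / C 0 * C x + x * K x := by linarith
      rw [h2]
      field_simp
      ring) (by simp [hb10, hb00])
  obtain ⟨β, hβ, hbβ, -⟩ := exists_eq_pow_mul_of_hasDerivAt (n := 5)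
    ((hW.mul (hH.pow 2)).mul (contDiff_const (c := (1 / 2 : ℝ)))) (b := b2) (fun x => by
      refine (hb2 x).congr_deriv ?_
      simp only [hwW, hhH]
      ring) hb20
  have hcond : deriv (fun x => deriv (deriv h) x / deriv w x) 0 = 3 * K 0 / C 0 := by
    obtain ⟨h1, h2⟩ := deriv_deriv_sq_mul hH hhH
    obtain ⟨h3, h4⟩ := deriv_deriv_sq_mul hC hbC
    rw [show deriv b0 = w from funext fun x => (hb0 x).deriv] at h3 h4
    have h5 := h2.div h4 hw1
    refine h5.deriv.trans ?_
    rw [h1, h3, hK0']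
    field_simp
    ring
  let κ : ℝ → ℝ := fun x => √(C x / C 0)
  let N : Set ℝ := {x | 0 < C x / C 0}
  have hN : IsOpen N := isOpen_lt continuous_const (hC.continuous.div_const _)
  have h0N : (0 : ℝ) ∈ N := by simp [N, hC0']
  have hκ : ContDiffOn ℝ (⊤ : ℕ∞) κ N := fun x hx =>
    ((hC.div_const _).contDiffAt.sqrt (ne_of_gt hx)).contDiffWithinAt
  have hκpos : ∀ x ∈ N, 0 < κ x := fun x hx => Real.sqrt_pos.2 hx
  have hκsq : ∀ x ∈ N, C x = C 0 * κ x ^ 2 := fun x hx => by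
    simp only [κ]
    rw [Real.sq_sqrt (le_of_lt hx), mul_div_cancel₀ _ hC0']
  have hκ0 : κ 0 = 1 := by simp [κ, hC0']
  let σ : ℝ → ℝ := fun x => x * κ x
  have hσ0 : σ 0 = 0 := by simp [σ]
  have hσd : HasDerivAt σ 1 0 := by
    have h1 := ((hκ.contDiffAt (hN.mem_nhds h0N)).differentiableAt (by simp)).hasDerivAt
    refine ((hasDerivAt_id (0 : ℝ)).mul h1).congr_deriv ?_
    simp [hκ0]
  have hσ : IsLocalDiffeoAt σ 0 := by
    refine isLocalDiffeoAt_of_hasFDerivAt (e := ContinuousLinearEquiv.refl ℝ ℝ) hN h0N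
      (contDiffOn_id.mul hκ) ?_
    exact hσd.hasFDerivAt.congr_fderiv (by ext; simp)
  obtain ⟨U, V, τ, hU, h0U, hV, h0V, -, hτ, -, hVU, hτσ, -⟩ := id hσ
  have hV' : IsOpen (V ∩ τ ⁻¹' N) := hτ.continuousOn.isOpen_inter_preimage hV hN
  have hτ0 : τ 0 = 0 := by rw [← hσ0, hτσ 0 h0U, hσ0]
  rw [hσ0] at h0V
  have h0V' : (0 : ℝ) ∈ V ∩ τ ⁻¹' N := ⟨h0V, by simpa [hτ0] using h0N⟩
  have hτ' : ContDiffOn ℝ (⊤ : ℕ∞) τ (V ∩ τ ⁻¹' N) := hτ.mono Set.inter_subset_left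
  have hdec : ∀ (n : ℕ) (θ : ℝ → ℝ), ContDiff ℝ (⊤ : ℕ∞) θ → ∃ A B : ℝ → ℝ,
      ContDiff ℝ (⊤ : ℕ∞) A ∧ ContDiff ℝ (⊤ : ℕ∞) B ∧ A 0 = θ 0 ∧
      ∀ᶠ x in nhds 0, x ^ n * θ x = σ x ^ n * (A (σ x ^ 2) + σ x * B (σ x ^ 2)) := by
    intro n θ hθ
    have h1 : ContDiffOn ℝ (⊤ : ℕ∞) (fun s => θ (τ s) / κ (τ s) ^ n) (V ∩ τ ⁻¹' N) :=
      (hθ.comp_contDiffOn hτ').div ((hκ.comp hτ' fun s hs => hs.2).pow n)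
        fun s hs => (pow_pos (hκpos _ hs.2) n).ne'
    obtain ⟨ψ, hψ, hψe⟩ := exists_contDiff_eventuallyEq hV' h0V' h1
    obtain ⟨A, B, hA, hB, hAB⟩ := exists_eq_comp_sq_add_mul_comp_sq hψ
    refine ⟨A, B, hA, hB, ?_, ?_⟩
    · have h2 := hψe.self_of_nhds
      simpa [hAB, hτ0, hκ0] using h2
    · have hσc : Tendsto σ (nhds 0) (nhds 0) := by
        simpa only [hσ0] using hσd.continuousAt.tendsto
      filter_upwards [hσc.eventually hψe, hU.mem_nhds h0U, hN.mem_nhds h0N] with x hx hxU hxN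
      rw [← hAB, hx, hτσ x hxU]
      simp only [σ]
      have := (hκpos x hxN).ne'
      field_simp
      ring
  obtain ⟨A, B, hA, hB, hA0, hAB⟩ := hdec 5 ρ hρ
  obtain ⟨R, S, hR, hS, -, hRS⟩ := hdec 6 β hβ
  refine ⟨σ, B, A, R, S, C 0, H 0 / (2 * C 0) * C 0 ^ 2, hσ, hσ0, hC0', hB, hA, hR, hS, ?_, ?_⟩
  · filter_upwards [hAB, hRS, hN.mem_nhds h0N] with x h1 h2 hxN
    have h3 : b0 x = C 0 * σ x ^ 2 := by
      rw [hbC, hκsq x hxN]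
      simp only [σ]
      ring
    refine ⟨h3, ?_, ?_⟩
    · have h4 := hrρ x
      simp only [h3] at h4
      norm_num at h4
      rw [h1] at h4
      linear_combination h4
    · rw [hbβ]
      norm_num
      rw [h2]
      ring
  · rw [hA0, hρ0, hcond]
    have hW0' : W 0 ≠ 0 := hW0 ▸ hw1
    simp [hW0', hC0']
    norm_num

theorem IsLocalDiffeoAt.exists_inverse {E F : Type*} [NormedAddCommGroup E] [NormedSpace ℝ E]
    [NormedAddCommGroup F] [NormedSpace ℝ F] {Φ : E → F} {p : E} (h : IsLocalDiffeoAt Φ p) :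
    ∃ Ψ : F → E, IsLocalDiffeoAt Ψ (Φ p) ∧ Ψ (Φ p) = p ∧ (∀ᶠ x in nhds p, Ψ (Φ x) = x) ∧
      ∀ᶠ y in nhds (Φ p), Φ (Ψ y) = y := by
  obtain ⟨U, V, Ψ, hU, hpU, hV, hpV, hΦ, hΨ, hUV, hVU, h1, h2⟩ := h
  refine ⟨Ψ, ⟨V, U, Φ, hV, hpV, hU, ?_, hΨ, hΦ, hVU, hUV, h2, h1⟩, h1 p hpU, ?_, ?_⟩
  · rwa [h1 p hpU]
  · filter_upwards [hU.mem_nhds hpU] using h1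
  · filter_upwards [hV.mem_nhds hpV] using h2

theorem IsLocalDiffeoAt.contDiffAt {E F : Type*} [NormedAddCommGroup E] [NormedSpace ℝ E]
    [NormedAddCommGroup F] [NormedSpace ℝ F] {Φ : E → F} {p : E} (h : IsLocalDiffeoAt Φ p) :
    ContDiffAt ℝ (⊤ : ℕ∞) Φ p := by
  obtain ⟨U, V, Ψ, hU, hpU, hV, hpV, hΦ, -⟩ := h
  exact hΦ.contDiffAt (hU.mem_nhds hpU)

theorem IsLocalDiffeoAt.differentiableAt {E F : Type*} [NormedAddCommGroup E] [NormedSpace ℝ E]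
    [NormedAddCommGroup F] [NormedSpace ℝ F] {Φ : E → F} {p : E} (h : IsLocalDiffeoAt Φ p) :
    DifferentiableAt ℝ Φ p :=
  h.contDiffAt.differentiableAt (by simp)

theorem IsLocalDiffeoAt.eq_zero_of_hasDerivAt {E F : Type*} [NormedAddCommGroup E]
    [NormedSpace ℝ E] [NormedAddCommGroup F] [NormedSpace ℝ F] {Φ : E → F} {c : ℝ → E} {c' : E}
    {t : ℝ} (h : IsLocalDiffeoAt Φ (c t)) (hc : HasDerivAt c c' t)
    (hΦc : HasDerivAt (fun s => Φ (c s)) 0 t) : c' = 0 := by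
  obtain ⟨Ψ, hΨ, -, hl, -⟩ := h.exists_inverse
  have h1 := hΨ.differentiableAt.hasFDerivAt.comp_hasDerivAt t hΦc
  rw [map_zero] at h1
  refine hc.unique (h1.congr_of_eventuallyEq ?_)
  filter_upwards [hc.continuousAt.eventually hl] with s hs
  simp [hs]

theorem IsLocalDiffeoAt.prodMap_sub {σ : ℝ → ℝ} (hσ : IsLocalDiffeoAt σ 0) (p : R2) :
    IsLocalDiffeoAt (fun q : R2 => (q.1 - p.1, σ (q.2 - p.2))) p := by
  obtain ⟨U, V, τ, hU, h0U, hV, h0V, hσ, hτ, hUV, hVU, h1, h2⟩ := hσ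
  have hs : ContDiff ℝ (⊤ : ℕ∞) fun q : R2 => q.2 - p.2 := contDiff_snd.sub contDiff_const
  refine ⟨(fun q : R2 => q.2 - p.2) ⁻¹' U, Prod.snd ⁻¹' V, fun q => (q.1 + p.1, τ q.2 + p.2),
    hU.preimage hs.continuous, by simpa using h0U, hV.preimage continuous_snd, by simpa using h0V,
    ?_, ?_, fun q hq => hUV hq, fun q hq => ?_, fun q hq => ?_, fun q hq => ?_⟩
  · exact (contDiff_fst.sub contDiff_const).contDiffOn.prodMk
      (hσ.comp hs.contDiffOn fun q hq => hq)
  · exact (contDiff_fst.add contDiff_const).contDiffOn.prodMk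
      ((hτ.comp contDiff_snd.contDiffOn fun q hq => hq).add contDiffOn_const)
  · simpa using hVU hq
  · have h3 := h1 (q.2 - p.2) hq
    simp [h3]
  · have h3 := h2 q.2 hq
    simp [h3]

theorem hasDerivAt_comp_mk_left {f : R2 → R3} (hf : ContDiff ℝ (⊤ : ℕ∞) f) (u v : ℝ) :
    HasDerivAt (fun v => f (u, v)) (pv f (u, v)) v :=
  (hf.differentiable (by simp) (u, v)).hasFDerivAt.comp_hasDerivAt v
    ((hasDerivAt_const v u).prodMk (hasDerivAt_id v))

theorem hasDerivAt_comp_mk_right {f : R2 → R3} (hf : ContDiff ℝ (⊤ : ℕ∞) f) (u v : ℝ) :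
    HasDerivAt (fun u => f (u, v)) (pu f (u, v)) u :=
  (hf.differentiable (by simp) (u, v)).hasFDerivAt.comp_hasDerivAt u
    ((hasDerivAt_id u).prodMk (hasDerivAt_const u v))

theorem deriv_eq_zero_of_not_isFrontAt {f : R2 → R3} {g1 g2 w1 w2 : ℝ → ℝ}
    (hf : IsGTMS f g1 g2 w1 w2) {p : R2} (hw2 : w2 p.2 = 0) (hw1 : w1 p.1 ≠ 0)
    (hg : g1 p.1 * g2 p.2 ≠ 1) (hnotfront : ¬ IsFrontAt f g1 g2 p) : deriv g2 p.2 = 0 := by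
  by_contra hne
  refine hnotfront ?_
  have hg1 : Differentiable ℝ g1 := hf.smooth_g1.differentiable (by simp)
  have hg2 : Differentiable ℝ g2 := hf.smooth_g2.differentiable (by simp)
  have hfd : DifferentiableAt ℝ f p := hf.smooth_f.differentiable (by simp) p
  have hpos : 0 < (1 - g1 p.1 * g2 p.2) ^ 2 + 2 * (g1 p.1 + g2 p.2) ^ 2 := by
    have : 1 - g1 p.1 * g2 p.2 ≠ 0 := sub_ne_zero.2 hg.symm
    positivity
  have hpoly : DifferentiableAt ℝ (fun q : R2 =>
      (1 - g1 q.1 * g2 q.2) ^ 2 + 2 * (g1 q.1 + g2 q.2) ^ 2) p := by fun_prop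
  have hρ : DifferentiableAt ℝ (fun q : R2 =>
      (√((1 - g1 q.1 * g2 q.2) ^ 2 + 2 * (g1 q.1 + g2 q.2) ^ 2))⁻¹) p :=
    (hpoly.sqrt hpos.ne').fun_inv (Real.sqrt_pos.2 hpos).ne'
  have hn : DifferentiableAt ℝ (gtmsNormal g1 g2) p := hρ.smul (by fun_prop)
  have hnv : fderiv ℝ (gtmsNormal g1 g2) p (0, 1) ≠ 0 := by
    intro h0
    have hline : HasDerivAt (fun v : ℝ => (p.1, v)) ((0 : ℝ), (1 : ℝ)) p.2 :=
      (hasDerivAt_const p.2 p.1).prodMk (hasDerivAt_id p.2)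
    have hn1 := hn.hasFDerivAt.comp_hasDerivAt p.2 hline
    rw [h0] at hn1
    have hρ1 := hρ.hasFDerivAt.comp_hasDerivAt p.2 hline
    have hg2' := (hg2 p.2).hasDerivAt
    have hN : HasDerivAt (fun v => (g1 p.1 + g2 v, -g1 p.1 + g2 v, 1 + g1 p.1 * g2 v))
        (deriv g2 p.2, deriv g2 p.2, g1 p.1 * deriv g2 p.2) p.2 :=
      (hg2'.const_add _).prodMk ((hg2'.const_add _).prodMk ((hg2'.const_mul _).const_add _))
    have h1 := hn1.unique (hρ1.smul hN)
    have hr : (√((1 - g1 p.1 * g2 p.2) ^ 2 + 2 * (g1 p.1 + g2 p.2) ^ 2))⁻¹ ≠ 0 :=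
      inv_ne_zero (Real.sqrt_pos.2 hpos).ne'
    simp only [Function.comp_apply] at h1
    generalize (√((1 - g1 p.1 * g2 p.2) ^ 2 + 2 * (g1 p.1 + g2 p.2) ^ 2))⁻¹ = r at h1 hr
    generalize (fderiv ℝ (fun q : R2 =>
      (√((1 - g1 q.1 * g2 q.2) ^ 2 + 2 * (g1 q.1 + g2 q.2) ^ 2))⁻¹) p) (0, 1) = r' at h1
    simp only [Prod.ext_iff, Prod.fst_zero, Prod.snd_zero, Prod.fst_add, Prod.snd_add,
      Prod.smul_fst, Prod.smul_snd, smul_eq_mul] at h1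
    obtain ⟨h1, h2, h3⟩ := h1
    have h4 : r' * g1 p.1 = 0 := by linear_combination (h2 - h1) / 2
    have h5 : r' = 0 := by
      rcases mul_eq_zero.1 h4 with h | h
      · exact h
      · rw [h] at h3
        linear_combination -h3
    rw [h5] at h1
    exact mul_ne_zero hr hne (by linear_combination -h1)
  unfold IsFrontAt
  rw [hfd.fderiv_prodMk hn, injective_iff_map_eq_zero]
  rintro ⟨a, b⟩ h
  have hab : ((a, b) : R2) = a • (1, 0) + b • (0, 1) := by simp
  have h1 : fderiv ℝ f p (a, b) = 0 := congrArg Prod.fst h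
  have h2 : fderiv ℝ (gtmsNormal g1 g2) p (a, b) = 0 := congrArg Prod.snd h
  have h3 : a • pu f p + b • pv f p = 0 := by
    rw [← h1, hab, map_add, map_smul, map_smul]; rfl
  rw [hf.deriv_u, hf.deriv_v, hw2] at h3
  simp only [Prod.ext_iff, Prod.fst_zero, Prod.snd_zero, Prod.fst_add, Prod.snd_add,
    Prod.smul_fst, Prod.smul_snd, smul_eq_mul] at h3
  have ha : a = 0 := by
    have h4 : a * w1 p.1 = 0 := by
      obtain ⟨h4, h5, h6⟩ := h3
      linear_combination h5 - h4
    exact (mul_eq_zero.1 h4).resolve_right hw1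
  rw [hab, ha, zero_smul, zero_add, map_smul] at h2
  have hb : b = 0 := (smul_eq_zero.1 h2).resolve_right hnv
  rw [ha, hb]
  rfl

theorem IsGTMS.eq_add_smul {f : R2 → R3} {g1 g2 w1 w2 b0 b1 b2 : ℝ → ℝ}
    (hf : IsGTMS f g1 g2 w1 w2) (v0 : ℝ)
    (hb0 : ∀ x, HasDerivAt b0 (w2 (v0 + x)) x) (hb00 : b0 0 = 0)
    (hb1 : ∀ x, HasDerivAt b1 (w2 (v0 + x) * (g2 (v0 + x) - g2 v0)) x) (hb10 : b1 0 = 0)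
    (hb2 : ∀ x, HasDerivAt b2 (w2 (v0 + x) * (g2 (v0 + x) - g2 v0) ^ 2 / 2) x) (hb20 : b2 0 = 0)
    (u x : ℝ) :
    f (u, v0 + x) = f (u, v0) + b0 x • ((1 + g2 v0 ^ 2) / 2, (1 - g2 v0 ^ 2) / 2, -g2 v0) +
      b1 x • (g2 v0, -g2 v0, -1) + b2 x • (1, -1, 0) := by
  have hder : ∀ y, HasDerivAt (fun x => f (u, v0 + x) -
      (b0 x • (((1 + g2 v0 ^ 2) / 2, (1 - g2 v0 ^ 2) / 2, -g2 v0) : R3) +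
        b1 x • ((g2 v0, -g2 v0, -1) : R3) + b2 x • ((1, -1, 0) : R3))) 0 y := by
    intro y
    have h1 := (hasDerivAt_comp_mk_left hf.smooth_f u (v0 + y)).comp_const_add v0 y
    have h2 := ((hb0 y).smul_const (((1 + g2 v0 ^ 2) / 2, (1 - g2 v0 ^ 2) / 2, -g2 v0) : R3)).add
      ((hb1 y).smul_const ((g2 v0, -g2 v0, -1) : R3)) |>.add
      ((hb2 y).smul_const ((1, -1, 0) : R3))
    refine (h1.sub h2).congr_deriv ?_
    rw [hf.deriv_v]
    simp only [Prod.ext_iff, Prod.fst_zero, Prod.snd_zero, Prod.fst_add, Prod.snd_add,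
      Prod.fst_sub, Prod.snd_sub, Prod.smul_fst, Prod.smul_snd, smul_eq_mul]
    refine ⟨?_, ?_, ?_⟩ <;> ring
  have h := is_const_of_deriv_eq_zero (fun y => (hder y).differentiableAt)
    (fun y => (hder y).deriv) x 0
  simp only [hb00, hb10, hb20, zero_smul, add_zero, sub_zero] at h
  rw [← h]
  abel

/-- The local normal form of the surface at a non-front `ω`-singular point: `Q 0 ≠ 0` is the
nonvanishing of the order five coefficient. -/
theorem IsGTMS.exists_normal_form {f : R2 → R3} {g1 g2 w1 w2 : ℝ → ℝ}
    (hf : IsGTMS f g1 g2 w1 w2) {v0 : ℝ} (hw2 : w2 v0 = 0) (hw2v : deriv w2 v0 ≠ 0)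
    (hg2v : deriv g2 v0 = 0) :
    ∃ (σ P Q R S : ℝ → ℝ) (ε m : ℝ), IsLocalDiffeoAt σ 0 ∧ σ 0 = 0 ∧ ε ≠ 0 ∧
      ContDiff ℝ (⊤ : ℕ∞) P ∧ ContDiff ℝ (⊤ : ℕ∞) Q ∧ ContDiff ℝ (⊤ : ℕ∞) R ∧
      ContDiff ℝ (⊤ : ℕ∞) S ∧
      (∀ᶠ x in nhds 0, ∀ u, f (u, v0 + x) = f (u, v0) +
        (ε * σ x ^ 2) • ((1 + g2 v0 ^ 2) / 2, (1 - g2 v0 ^ 2) / 2, -g2 v0) +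
        (m * σ x ^ 4 + σ x ^ 6 * P (σ x ^ 2) + σ x ^ 5 * Q (σ x ^ 2)) • (g2 v0, -g2 v0, -1) +
        (σ x ^ 6 * R (σ x ^ 2) + σ x ^ 7 * S (σ x ^ 2)) • (1, -1, 0)) ∧
      (Q 0 ≠ 0 ↔ deriv (fun v => deriv (deriv g2) v / deriv w2 v) v0 ≠ 0) := by
  have hs : ContDiff ℝ (⊤ : ℕ∞) fun x : ℝ => v0 + x := contDiff_const.add contDiff_id
  have hw : ContDiff ℝ (⊤ : ℕ∞) fun x => w2 (v0 + x) := hf.smooth_w2.comp hs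
  have hh : ContDiff ℝ (⊤ : ℕ∞) fun x => g2 (v0 + x) - g2 v0 :=
    (hf.smooth_g2.comp hs).sub contDiff_const
  have hdw : deriv (fun x => w2 (v0 + x)) = fun x => deriv w2 (v0 + x) :=
    funext fun x => deriv_comp_const_add ..
  have hdh : deriv (fun x => g2 (v0 + x) - g2 v0) = fun x => deriv g2 (v0 + x) :=
    funext fun x => by rw [deriv_sub_const, deriv_comp_const_add]
  have hprim : ∀ k : ℝ → ℝ, Continuous k → ∃ b : ℝ → ℝ, (∀ x, HasDerivAt b (k x) x) ∧ b 0 = 0 :=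
    fun k hk => ⟨fun x => ∫ t in (0 : ℝ)..x, k t,
      fun x => hk.integral_hasStrictDerivAt 0 x |>.hasDerivAt,
      intervalIntegral.integral_same⟩
  obtain ⟨b0, hb0, hb00⟩ := hprim _ hw.continuous
  obtain ⟨b1, hb1, hb10⟩ := hprim _ (hw.continuous.mul hh.continuous)
  obtain ⟨b2, hb2, hb20⟩ := hprim (fun x => w2 (v0 + x) * (g2 (v0 + x) - g2 v0) ^ 2 / 2)
    ((hw.continuous.mul (hh.continuous.pow 2)).div_const 2)
  obtain ⟨σ, P, Q, R, S, ε, m, hσ, hσ0, hε, hP, hQ, hR, hS, hev, hiff⟩ :=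
    exists_curve_normal_form hw hh (by simpa using hw2) (by simpa [hdw] using hw2v) (by simp)
      (by simpa [hdh] using hg2v) hb0 hb00 hb1 hb10 hb2 hb20
  refine ⟨σ, P, Q, R, S, ε, m, hσ, hσ0, hε, hP, hQ, hR, hS, ?_, ?_⟩
  · filter_upwards [hev] with x hx u
    rw [hf.eq_add_smul v0 hb0 hb00 hb1 hb10 hb2 hb20, hx.1, hx.2.1, hx.2.2]
  · rw [hiff, hdw, hdh]
    have h1 : deriv (fun x => deriv g2 (v0 + x)) = fun x => deriv (deriv g2) (v0 + x) :=
      funext fun x => deriv_comp_const_add ..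
    rw [h1, deriv_comp_const_add (f := fun v => deriv (deriv g2) v / deriv w2 v), add_zero]

theorem isLocalDiffeoAt_of_injective_fderiv {E : Type*} [NormedAddCommGroup E] [NormedSpace ℝ E]
    [FiniteDimensional ℝ E] {Φ : E → E} {p : E} (hΦ : ContDiff ℝ (⊤ : ℕ∞) Φ)
    (h : Function.Injective (fderiv ℝ Φ p)) : IsLocalDiffeoAt Φ p := by
  have : CompleteSpace E := FiniteDimensional.complete ℝ E
  refine isLocalDiffeoAt_of_hasFDerivAt isOpen_univ (Set.mem_univ p) hΦ.contDiffOn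
    (e := (LinearEquiv.ofInjectiveEndo (fderiv ℝ Φ p).toLinearMap h).toContinuousLinearEquiv) ?_
  exact (hΦ.differentiable (by simp) p).hasFDerivAt

theorem aEquiv_fCE25_of_normal_form {f : R2 → R3} {g1 g2 w1 w2 : ℝ → ℝ}
    (hf : IsGTMS f g1 g2 w1 w2) {p : R2} (hw1 : w1 p.1 ≠ 0) (hg : g1 p.1 * g2 p.2 ≠ 1)
    {σ P Q R S : ℝ → ℝ} {ε m : ℝ} (hσ : IsLocalDiffeoAt σ 0) (hσ0 : σ 0 = 0) (hε : ε ≠ 0)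
    (hP : ContDiff ℝ (⊤ : ℕ∞) P) (hQ : ContDiff ℝ (⊤ : ℕ∞) Q) (hR : ContDiff ℝ (⊤ : ℕ∞) R)
    (hS : ContDiff ℝ (⊤ : ℕ∞) S)
    (hev : ∀ᶠ x in nhds 0, ∀ u, f (u, p.2 + x) = f (u, p.2) +
        (ε * σ x ^ 2) • ((1 + g2 p.2 ^ 2) / 2, (1 - g2 p.2 ^ 2) / 2, -g2 p.2) +
        (m * σ x ^ 4 + σ x ^ 6 * P (σ x ^ 2) + σ x ^ 5 * Q (σ x ^ 2)) • (g2 p.2, -g2 p.2, -1) +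
        (σ x ^ 6 * R (σ x ^ 2) + σ x ^ 7 * S (σ x ^ 2)) • (1, -1, 0))
    (hQ0 : Q 0 ≠ 0) : AEquiv f p fCE25 (0, 0) := by
  have hfs := hf.smooth_f
  set Θ : R3 → R3 := fun q => f (p.1 + q.1, p.2) +
    (ε * q.2.1) • ((1 + g2 p.2 ^ 2) / 2, (1 - g2 p.2 ^ 2) / 2, -g2 p.2) +
    (m * q.2.1 ^ 2 + q.2.1 ^ 3 * P q.2.1 + q.2.2 * Q q.2.1) • (g2 p.2, -g2 p.2, -1) +
    (q.2.1 ^ 3 * R q.2.1 + q.2.2 * (q.2.1 * S q.2.1)) • (1, -1, 0) with hΘdef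
  have hΘ : ContDiff ℝ (⊤ : ℕ∞) Θ := by fun_prop
  have hΘ0 : Θ 0 = f p := by simp [hΘdef, -Prod.smul_mk]
  have hcurve : ∀ q : R3, fderiv ℝ Θ 0 q = q.1 • pu f p +
      (ε * q.2.1) • ((1 + g2 p.2 ^ 2) / 2, (1 - g2 p.2 ^ 2) / 2, -g2 p.2) +
      (q.2.2 * Q 0) • (g2 p.2, -g2 p.2, -1) := by
    rintro ⟨a, b, c⟩
    have hline : ∀ k : ℝ, HasDerivAt (fun t : ℝ => t * k) k 0 := fun k => by
      simpa using (hasDerivAt_id (0 : ℝ)).mul_const k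
    have hcomp : ∀ {F : ℝ → ℝ}, ContDiff ℝ (⊤ : ℕ∞) F →
        HasDerivAt (fun t : ℝ => F (t * b)) (deriv F 0 * b) 0 := fun {F} hF => by
      have h0 : HasDerivAt F (deriv F 0) (0 * b) := by
        rw [zero_mul]
        exact (hF.differentiable (by simp) 0).hasDerivAt
      exact h0.comp (0 : ℝ) (hline b)
    have h1 : HasDerivAt (fun t => Θ (t * a, t * b, t * c)) (fderiv ℝ Θ 0 (a, b, c)) 0 := by
      have h0 : HasFDerivAt Θ (fderiv ℝ Θ 0) (0 * a, 0 * b, 0 * c) := by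
        simp only [zero_mul]
        exact (hΘ.differentiable (by simp) 0).hasFDerivAt
      exact h0.comp_hasDerivAt (0 : ℝ) ((hline a).prodMk ((hline b).prodMk (hline c)))
    have h2 : HasDerivAt (fun t => f (p.1 + t * a, p.2)) (a • pu f p) 0 := by
      have h0 : HasDerivAt (fun u => f (u, p.2)) (pu f p) (p.1 + 0 * a) := by
        rw [zero_mul, add_zero]
        exact hasDerivAt_comp_mk_right hfs p.1 p.2
      exact h0.scomp (0 : ℝ) ((hline a).const_add p.1)
    have h3 := ((h2.add (((hline b).const_mul ε).smul_const
        (((1 + g2 p.2 ^ 2) / 2, (1 - g2 p.2 ^ 2) / 2, -g2 p.2) : R3))).add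
      ((((((hline b).pow 2).const_mul m).add (((hline b).pow 3).mul (hcomp hP))).add
        ((hline c).mul (hcomp hQ))).smul_const ((g2 p.2, -g2 p.2, -1) : R3))).add
      (((((hline b).pow 3).mul (hcomp hR)).add
        ((hline c).mul ((hline b).mul (hcomp hS)))).smul_const ((1, -1, 0) : R3))
    rw [h1.unique h3]
    simp
  have hinj : Function.Injective (fderiv ℝ Θ 0) := by
    rw [injective_iff_map_eq_zero]
    rintro ⟨a, b, c⟩ h
    rw [hcurve, hf.deriv_u] at h
    simp only [Prod.ext_iff, Prod.fst_zero, Prod.snd_zero, Prod.fst_add, Prod.snd_add,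
      Prod.smul_fst, Prod.smul_snd, smul_eq_mul] at h
    obtain ⟨h1, h2, h3⟩ := h
    have h4 : ε * b = a * w1 p.1 * g1 p.1 ^ 2 := by linear_combination h1 + h2
    have h5 : c * Q 0 = a * w1 p.1 * g1 p.1 - ε * b * g2 p.2 := by linear_combination -h3
    have h6 : a * w1 p.1 * (1 - g1 p.1 * g2 p.2) ^ 2 = 0 := by
      rw [h5, h4] at h1 h2
      linear_combination h2 - h1
    have ha : a = 0 := by
      have : 1 - g1 p.1 * g2 p.2 ≠ 0 := sub_ne_zero.2 hg.symm
      simpa [hw1, this] using h6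
    have hb : b = 0 := by simpa [ha, hε] using h4
    have hc : c = 0 := by simpa [ha, hb, hQ0] using h5
    rw [ha, hb, hc]
    rfl
  obtain ⟨Ψ, hΨ, hΨ0, hl, -⟩ := (isLocalDiffeoAt_of_injective_fderiv hΘ hinj).exists_inverse
  rw [hΘ0] at hΨ hΨ0
  refine ⟨fun q => (q.1 - p.1, σ (q.2 - p.2)), Ψ, hσ.prodMap_sub p, by simp [hσ0], hΨ, ?_, ?_⟩
  · rw [hΨ0]
    simp [fCE25]
    rfl
  · have hσc : ContinuousAt σ 0 := hσ.differentiableAt.continuousAt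
    have hΦc : ContinuousAt (fun q : R2 => fCE25 (q.1 - p.1, σ (q.2 - p.2))) p := by
      have h0 : ContinuousAt (fun q : R2 => σ (q.2 - p.2)) p :=
        ContinuousAt.comp (g := σ) (by simpa using hσc) (by fun_prop)
      exact (by fun_prop : ContinuousAt (fun q : R2 => q.1 - p.1) p).prodMk
        ((h0.pow 2).prodMk (h0.pow 5))
    have hΦ0 : fCE25 (p.1 - p.1, σ (p.2 - p.2)) = 0 := by simp [fCE25, hσ0]
    have h1 := hΦc.eventually (p := fun y => Ψ (Θ y) = y) (by
      simpa only [hΦ0] using hl)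
    have hsub : Tendsto (fun q : R2 => q.2 - p.2) (nhds p) (nhds 0) := by
      have : ContinuousAt (fun q : R2 => q.2 - p.2) p := by fun_prop
      simpa [ContinuousAt] using this
    filter_upwards [h1, hsub.eventually hev] with q h1 h2
    rw [← h1]
    congr 1
    have h3 := h2 q.1
    rw [add_sub_cancel] at h3
    rw [show q = (q.1, q.2) from rfl, h3]
    simp only [hΘdef, fCE25, add_sub_cancel]
    congr 3 <;> ring

theorem eq_zero_of_pow_five_sub_isLittleO {V : ℝ → ℝ} {κ : ℝ} (hV : HasDerivAt V κ 0)
    (hV0 : V 0 = 0)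
    (h : (fun s => V s ^ 5 - V (-s) ^ 5) =o[nhds 0] fun s : ℝ => s ^ 5) : κ = 0 := by
  have hneg : HasDerivAt (fun s => V (-s)) (-κ) 0 := by
    have h0 : HasDerivAt V κ (-0) := by rwa [neg_zero]
    exact (h0.comp (0 : ℝ) (hasDerivAt_neg (0 : ℝ))).congr_deriv (mul_neg_one κ)
  have h1 : Tendsto (fun s => s⁻¹ * V s) (nhdsWithin 0 {0}ᶜ) (nhds κ) := by
    simpa [hV0] using hV.tendsto_slope_zero
  have h2 : Tendsto (fun s => s⁻¹ * V (-s)) (nhdsWithin 0 {0}ᶜ) (nhds (-κ)) := by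
    simpa [hV0] using hneg.tendsto_slope_zero
  have h3 := (h1.pow 5).sub (h2.pow 5)
  have h4 := h.tendsto_div_nhds_zero.mono_left (nhdsWithin_le_nhds (s := {0}ᶜ))
  have h5 := tendsto_nhds_unique h3 (h4.congr fun s => by ring)
  have h6 : κ ^ 5 = 0 := by linear_combination h5 / 2
  exact pow_eq_zero_iff (by norm_num) |>.1 h6

theorem not_aEquiv_fCE25_of_normal_form {f : R2 → R3} (hf : ContDiff ℝ (⊤ : ℕ∞) f) {p : R2}
    (hpv : pv f p = 0) {σ A B C Q S : ℝ → ℝ} {e0 e1 e2 : R3}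
    (hσ : IsLocalDiffeoAt σ 0) (hσ0 : σ 0 = 0) (hQ : Continuous Q) (hS : Continuous S)
    (hev : ∀ᶠ x in nhds 0, f (p.1, p.2 + x) = f (p.1, p.2) + A (σ x ^ 2) • e0 +
      (B (σ x ^ 2) + σ x ^ 5 * Q (σ x ^ 2)) • e1 +
      (C (σ x ^ 2) + σ x ^ 7 * S (σ x ^ 2)) • e2)
    (hQ0 : Q 0 = 0) : ¬ AEquiv f p fCE25 (0, 0) := by
  rintro ⟨Φ, Ψ, hΦ, hΦp, hΨ, hΨp, heq⟩
  obtain ⟨τ, hτ, hτ0, -, hστ⟩ := hσ.exists_inverse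
  rw [hσ0] at hτ hτ0 hστ
  have hτd : HasDerivAt τ (deriv τ 0) 0 := hτ.differentiableAt.hasDerivAt
  have hτ' : deriv τ 0 ≠ 0 := fun h0 => one_ne_zero <|
    IsLocalDiffeoAt.eq_zero_of_hasDerivAt (c := id) hτ (hasDerivAt_id (0 : ℝ))
      (by simpa [h0] using hτd)
  have hneg : Tendsto (fun s : ℝ => -s) (nhds 0) (nhds 0) := by
    simpa using (continuous_neg (G := ℝ)).tendsto 0
  have hτt : Tendsto τ (nhds 0) (nhds 0) := by simpa [hτ0] using hτd.continuousAt.tendsto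
  set ℓ : ℝ → R2 := fun s => (p.1, p.2 + τ s) with hℓ
  have hℓ0 : ℓ 0 = p := by simp [hℓ, hτ0]
  have hℓd : HasDerivAt ℓ (0, deriv τ 0) 0 := (hasDerivAt_const _ _).prodMk (hτd.const_add _)
  have hℓt : Tendsto ℓ (nhds 0) (nhds p) := by simpa [hℓ0] using hℓd.continuousAt.tendsto
  have hfp : HasFDerivAt f (fderiv ℝ f p) (ℓ 0) := by
    rw [hℓ0]
    exact (hf.differentiable (by simp) p).hasFDerivAt
  have hcd : HasDerivAt (fun s => f (ℓ s)) 0 0 := by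
    refine (hfp.comp_hasDerivAt (0 : ℝ) hℓd).congr_deriv ?_
    rw [show ((0, deriv τ 0) : R2) = deriv τ 0 • (0, 1) by simp, map_smul]
    exact (congrArg _ hpv).trans (smul_zero _)
  have hct : Tendsto (fun s => f (ℓ s)) (nhds 0) (nhds (f p)) := by
    simpa [hℓ0] using hcd.continuousAt.tendsto
  have hodd : ∀ᶠ s in nhds 0, f (ℓ s) - f (ℓ (-s)) =
      s ^ 5 • ((2 * Q (s ^ 2)) • e1 + (2 * s ^ 2 * S (s ^ 2)) • e2) := by
    have h1 := (hτt.eventually hev).and hστ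
    filter_upwards [h1, hneg.eventually h1] with s hs hs'
    simp only [hℓ]
    rw [hs.1, hs'.1, hs.2, hs'.2, neg_sq]
    module
  have hsmall : (fun s => f (ℓ s) - f (ℓ (-s))) =o[nhds 0] fun s : ℝ => s ^ 5 := by
    have h1 : Tendsto (fun s : ℝ => (2 * Q (s ^ 2)) • e1 + (2 * s ^ 2 * S (s ^ 2)) • e2)
        (nhds 0) (nhds 0) := by
      have : Continuous fun s : ℝ => (2 * Q (s ^ 2)) • e1 + (2 * s ^ 2 * S (s ^ 2)) • e2 := by
        fun_prop
      simpa [hQ0, -Prod.smul_mk] using this.tendsto 0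
    have h2 := (Asymptotics.isBigO_refl (fun s : ℝ => s ^ 5) (nhds 0)).smul_isLittleO
      ((Asymptotics.isLittleO_one_iff ℝ).2 h1)
    simp only [smul_eq_mul, mul_one] at h2
    exact h2.congr' (hodd.mono fun s hs => hs.symm) EventuallyEq.rfl
  have hΨsmall : (fun s => Ψ (f (ℓ s)) - Ψ (f (ℓ (-s)))) =o[nhds 0] fun s : ℝ => s ^ 5 := by
    obtain ⟨K, t, ht, hK⟩ :=
      (hΨ.contDiffAt.of_le (by simp : (1 : WithTop ℕ∞) ≤ _)).exists_lipschitzOnWith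
    refine Asymptotics.IsBigO.trans_isLittleO (Asymptotics.IsBigO.of_bound K ?_) hsmall
    filter_upwards [hct.eventually ht, (hct.comp hneg).eventually ht] with s hs hs'
    exact hK.norm_sub_le hs hs'
  have hγeq : ∀ᶠ s in nhds 0, Ψ (f (ℓ s)) = fCE25 (Φ (ℓ s)) := hℓt.eventually heq
  have hΦp' : IsLocalDiffeoAt Φ (ℓ 0) := by rwa [hℓ0]
  have hγd := hΦp'.differentiableAt.hasFDerivAt.comp_hasDerivAt (0 : ℝ) hℓd
  have h1 : HasDerivAt (fun s => (Φ (ℓ s)).1) 0 0 := by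
    have hΨf : HasFDerivAt Ψ (fderiv ℝ Ψ (f (ℓ 0))) (f (ℓ 0)) := by
      rw [hℓ0]
      exact hΨ.differentiableAt.hasFDerivAt
    have h0 := (ContinuousLinearMap.fst ℝ ℝ (ℝ × ℝ)).hasFDerivAt.comp_hasDerivAt (0 : ℝ)
      (hΨf.comp_hasDerivAt (0 : ℝ) hcd)
    rw [map_zero, map_zero] at h0
    exact h0.congr_of_eventuallyEq (hγeq.mono fun s hs => (congrArg Prod.fst hs).symm)
  have h2 : HasDerivAt (fun s => (Φ (ℓ s)).2) 0 0 := by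
    have h0 := (ContinuousLinearMap.snd ℝ ℝ ℝ).hasFDerivAt.comp_hasDerivAt (0 : ℝ) hγd
    refine h0.congr_deriv (eq_zero_of_pow_five_sub_isLittleO h0 (by simp [hℓ0, hΦp]) ?_)
    refine Asymptotics.IsBigO.trans_isLittleO (Asymptotics.IsBigO.of_bound 1 ?_) hΨsmall
    filter_upwards [hγeq, hneg.eventually hγeq] with s hs hs'
    rw [one_mul, hs, hs']
    exact (norm_snd_le (fCE25 (Φ (ℓ s)) - fCE25 (Φ (ℓ (-s)))).2).trans (norm_snd_le _)
  have h3 := hΦp'.eq_zero_of_hasDerivAt hℓd (h1.prodMk h2)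
  exact hτ' (congrArg Prod.snd h3)

/-- criterion for the (2,5)-cuspidal edge at a non-degenerate rank-one
ω-singular point at which the surface is not a front. -/
theorem criterion_25_cuspidal_edge
    (f : R2 → R3) (g1 g2 w1 w2 : ℝ → ℝ) (hf : IsGTMS f g1 g2 w1 w2)
    (p : R2) (hw2 : w2 p.2 = 0) (hrank : RankOne f p)
    (hnondeg : fderiv ℝ (areaDensity f g1 g2) p ≠ 0)
    (hw1 : w1 p.1 ≠ 0) (hw2v : deriv w2 p.2 ≠ 0) (hg : g1 p.1 * g2 p.2 ≠ 1)
    (hnotfront : ¬ IsFrontAt f g1 g2 p) :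
    AEquiv f p fCE25 (0, 0) ↔
      deriv (fun v => deriv (deriv g2) v / deriv w2 v) p.2 ≠ 0 := by
  obtain ⟨σ, P, Q, R, S, ε, m, hσ, hσ0, hε, hP, hQ, hR, hS, hev, hiff⟩ :=
    hf.exists_normal_form hw2 hw2v (deriv_eq_zero_of_not_isFrontAt hf hw2 hw1 hg hnotfront)
  rw [← hiff]
  refine ⟨fun hA hQ0 => ?_, aEquiv_fCE25_of_normal_form hf hw1 hg hσ hσ0 hε hP hQ hR hS hev⟩
  have hpv : pv f p = 0 := by
    rw [hf.deriv_v, hw2]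
    simp
  refine not_aEquiv_fCE25_of_normal_form hf.smooth_f hpv
    (e0 := ((1 + g2 p.2 ^ 2) / 2, (1 - g2 p.2 ^ 2) / 2, -g2 p.2)) (e1 := (g2 p.2, -g2 p.2, -1))
    (e2 := (1, -1, 0)) (A := fun y => ε * y)
    (B := fun y => m * y ^ 2 + y ^ 3 * P y) (C := fun y => y ^ 3 * R y) hσ hσ0 hQ.continuous
    hS.continuous ?_ hQ0 hA
  filter_upwards [hev] with x hx
  rw [hx p.1]
  congr 3
  · ring
  · ring
end
end

section
/- Existence of (2,2k+1)-cuspidal edges for every positive integer k: let k ≥ 1 be an integer and let f be the generalized timelike minimal surface with real Weierstrass data (g1, g2, ω1 du, ω2 dv) in which g2(v) = v^{2k-1}, ω2(v) = v, and g1, ω1 are smooth functions of u with ω1(0) ≠ 0. Then at each point (u0, 0) of the line v = 0 with ω1(u0) ≠ 0, the map f is A-equivalent to the (2,2k+1)-cuspidal edge f_CE^{(2,2k+1)}(u,v) = (u, v^2, v^{2k+1}) at the origin. -/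
noncomputable section

open Real Filter

/-- Inverse function theorem: a smooth map with invertible differential at `p` has a local
inverse which is a germ of diffeomorphism. -/
lemma exists_isLocalDiffeoAt_leftInverse {E F : Type*} [NormedAddCommGroup E] [NormedSpace ℝ E]
    [CompleteSpace E] [NormedAddCommGroup F] [NormedSpace ℝ F] {Θ : E → F} {p : E}
    (hΘ : ContDiff ℝ (⊤ : ℕ∞) Θ) {e : E ≃L[ℝ] F} (he : HasFDerivAt Θ (e : E →L[ℝ] F) p) :
    ∃ Ψ : F → E, IsLocalDiffeoAt Ψ (Θ p) ∧ ∀ᶠ x in nhds p, Ψ (Θ x) = x := by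
  have hn : ((⊤ : ℕ∞) : WithTop ℕ∞) ≠ 0 := by simp
  set H := hΘ.contDiffAt.toOpenPartialHomeomorph Θ he hn
  have hpH : p ∈ H.source := hΘ.contDiffAt.mem_toOpenPartialHomeomorph_source he hn
  set S : Set E := fderiv ℝ Θ ⁻¹' Set.range ((↑) : (E ≃L[ℝ] F) → E →L[ℝ] F)
  have hSo : IsOpen S := ContinuousLinearEquiv.isOpen.preimage (hΘ.continuous_fderiv hn)
  set G := H.restrOpen S hSo
  have hGs : G.source = H.source ∩ S := H.restrOpen_source S hSo
  have hGΘ : ∀ x, G x = Θ x := fun x => rfl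
  have hpG : p ∈ G.source := by
    rw [hGs]
    exact ⟨hpH, e, he.fderiv.symm⟩
  refine ⟨G.symm, ⟨G.target, G.source, Θ, G.open_target, ?_, G.open_source, ?_, ?_,
    hΘ.contDiffOn, G.symm.mapsTo, ?_, fun x hx => G.right_inv hx, fun y hy => G.left_inv hy⟩, ?_⟩
  · exact G.map_source hpG
  · rw [← hGΘ, G.left_inv hpG]
    exact hpG
  · intro y hy
    have hy' := G.map_target hy
    rw [hGs] at hy'
    obtain ⟨e', he'⟩ := hy'.2
    refine (G.contDiffAt_symm hy (f₀' := e') ?_ hΘ.contDiffAt).contDiffWithinAt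
    rw [he']
    exact (hΘ.differentiable hn _).hasFDerivAt
  · exact G.mapsTo
  · filter_upwards [G.open_source.mem_nhds hpG] with x hx
    exact G.left_inv hx

lemma isLocalDiffeoAt_sub_const {E : Type*} [NormedAddCommGroup E] [NormedSpace ℝ E] (c p : E) :
    IsLocalDiffeoAt (fun x => x - c) p :=
  ⟨Set.univ, Set.univ, fun x => x + c, isOpen_univ, trivial, isOpen_univ, trivial,
    (contDiff_id.sub contDiff_const).contDiffOn, (contDiff_id.add contDiff_const).contDiffOn,
    Set.mapsTo_univ _ _, Set.mapsTo_univ _ _, fun _ _ => sub_add_cancel _ _,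
    fun _ _ => add_sub_cancel_right _ _⟩

/-- The `v`-part of the surface with `g2 = v ^ (2 * k - 1)`, `ω2 = v`, in terms of
`q = v ^ 2` and `r = v ^ (2 * k + 1)`. -/
def cuspidalPart (k : ℕ) (q r : ℝ) : R3 :=
  (q / 4 + q ^ (2 * k) / (8 * k), q / 4 - q ^ (2 * k) / (8 * k), -(r / (2 * k + 1)))

lemma hasDerivAt_cuspidalPart {k : ℕ} (hk : 1 ≤ k) (v : ℝ) :
    HasDerivAt (fun v : ℝ => cuspidalPart k (v ^ 2) (v ^ (2 * k + 1)))
      ((1 + (v ^ (2 * k - 1)) ^ 2) * v / 2, (1 - (v ^ (2 * k - 1)) ^ 2) * v / 2,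
        -(v ^ (2 * k - 1) * v)) v := by
  obtain ⟨m, rfl⟩ := Nat.exists_eq_add_of_le' hk
  have e : 2 * (m + 1) - 1 = 2 * m + 1 := by omega
  have h1 : HasDerivAt (fun v : ℝ => v ^ 2 / 4) (v / 2) v :=
    ((hasDerivAt_pow 2 v).div_const 4).congr_deriv (by norm_num; ring)
  have h2 : HasDerivAt (fun v : ℝ => (v ^ 2) ^ (2 * (m + 1)) / (8 * ((m + 1 : ℕ) : ℝ)))
      ((v ^ (2 * m + 1)) ^ 2 * v / 2) v := by
    refine (((hasDerivAt_pow 2 v).fun_pow (2 * (m + 1))).div_const _).congr_deriv ?_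
    rw [e]
    push_cast
    field_simp
    ring
  have h3 : HasDerivAt (fun v : ℝ => v ^ (2 * (m + 1) + 1) / (2 * ((m + 1 : ℕ) : ℝ) + 1))
      (v ^ (2 * m + 1) * v) v := by
    refine ((hasDerivAt_pow (2 * (m + 1) + 1) v).div_const _).congr_deriv ?_
    push_cast
    field_simp
    ring
  rw [e]
  refine ((h1.add h2).prodMk ((h1.sub h2).prodMk h3.neg)).congr_deriv ?_
  ext <;> simp only <;> ring

lemma cuspidalPart_zero {k : ℕ} (hk : 1 ≤ k) : cuspidalPart k 0 0 = 0 := by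
  have : 2 * k ≠ 0 := by omega
  simp [cuspidalPart, this]

/-- The surface splits into a function of `u` and a function of `v`. -/
lemma IsGTMS.eq_add_cuspidalPart {k : ℕ} (hk : 1 ≤ k) {f : R2 → R3} {g1 w1 : ℝ → ℝ}
    (hf : IsGTMS f g1 (fun v => v ^ (2 * k - 1)) w1 (fun v => v)) (u v : ℝ) :
    f (u, v) = f (u, 0) + cuspidalPart k (v ^ 2) (v ^ (2 * k + 1)) := by
  have hd : ∀ v, HasDerivAt
      (fun v => f (u, v) - cuspidalPart k (v ^ 2) (v ^ (2 * k + 1))) 0 v := by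
    intro v
    have h1 : HasDerivAt (fun v => f (u, v)) (pv f (u, v)) v :=
      (hf.smooth_f.differentiable (by simp) (u, v)).hasFDerivAt.comp_hasDerivAt v
        ((hasDerivAt_const v u).prodMk (hasDerivAt_id v))
    refine (h1.sub (hasDerivAt_cuspidalPart hk v)).congr_deriv ?_
    rw [hf.deriv_v, sub_self]
  have h := is_const_of_deriv_eq_zero (fun v => (hd v).differentiableAt)
    (fun v => (hd v).deriv) v 0
  have h0 : cuspidalPart k ((0 : ℝ) ^ 2) ((0 : ℝ) ^ (2 * k + 1)) = 0 := by
    simpa using cuspidalPart_zero hk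
  rw [h0, sub_zero] at h
  rw [← h, sub_add_cancel]

/-- The map of the ambient space carrying the standard `(2, 2k+1)`-cuspidal edge to `f`. -/
def edgeStraightening (k : ℕ) (f : R2 → R3) (u0 : ℝ) (x : R3) : R3 :=
  f (u0 + x.1, 0) + cuspidalPart k x.2.1 x.2.2

lemma contDiff_edgeStraightening (k : ℕ) {f : R2 → R3} (hf : ContDiff ℝ (⊤ : ℕ∞) f) (u0 : ℝ) :
    ContDiff ℝ (⊤ : ℕ∞) (edgeStraightening k f u0) := by
  unfold edgeStraightening cuspidalPart
  fun_prop

lemma exists_hasFDerivAt_edgeStraightening {k : ℕ} (hk : 1 ≤ k) {f : R2 → R3} {g1 g2 w1 w2 : ℝ → ℝ}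
    (hf : IsGTMS f g1 g2 w1 w2) {u0 : ℝ} (hw : w1 u0 ≠ 0) :
    ∃ e : R3 ≃L[ℝ] R3, HasFDerivAt (edgeStraightening k f u0) (e : R3 →L[ℝ] R3) 0 := by
  have hd := ((contDiff_edgeStraightening k hf.smooth_f u0).differentiable (by simp)
    0).hasFDerivAt
  set L := fderiv ℝ (edgeStraightening k f u0) 0
  have hL : ∀ x : R3, L x = x.1 • pu f (u0, 0) +
      (x.2.1 / 4, x.2.1 / 4, -(x.2.2 / (2 * (k : ℝ) + 1))) := by
    intro x
    have hline : HasDerivAt (fun t : ℝ => edgeStraightening k f u0 (t • x)) (L x) 0 := by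
      have hd' : HasFDerivAt (edgeStraightening k f u0) L ((0 : ℝ) • x) := by
        rwa [zero_smul]
      exact hd'.comp_hasDerivAt (0 : ℝ)
        (((hasDerivAt_id (0 : ℝ)).smul_const x).congr_deriv (one_smul ℝ x))
    have hlin : ∀ c : ℝ, HasDerivAt (fun t : ℝ => t * c) c 0 := fun c => by
      simpa using (hasDerivAt_id (0 : ℝ)).mul_const c
    have h1 : HasDerivAt (fun t : ℝ => f (u0 + t * x.1, 0)) (x.1 • pu f (u0, 0)) 0 := by
      have h : HasFDerivAt f (fderiv ℝ f (u0, 0)) (u0 + 0 * x.1, (0 : ℝ)) := by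
        simpa using (hf.smooth_f.differentiable (by simp) (u0, 0)).hasFDerivAt
      refine (h.comp_hasDerivAt (f := fun t : ℝ => (u0 + t * x.1, (0 : ℝ))) (0 : ℝ)
        (((hlin x.1).const_add u0).prodMk (hasDerivAt_const (0 : ℝ) (0 : ℝ)))).congr_deriv ?_
      rw [pu, ← map_smul]
      simp
    have hpow : HasDerivAt (fun t : ℝ => (t * x.2.1) ^ (2 * k) / (8 * (k : ℝ))) 0 0 := by
      refine (((hlin x.2.1).fun_pow (2 * k)).div_const _).congr_deriv ?_
      have : 2 * k - 1 ≠ 0 := by omega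
      simp [this]
    have h2 : HasDerivAt (fun t : ℝ => cuspidalPart k (t * x.2.1) (t * x.2.2))
        (x.2.1 / 4, x.2.1 / 4, -(x.2.2 / (2 * (k : ℝ) + 1))) 0 := by
      have hq := (hlin x.2.1).div_const 4
      refine ((hq.add hpow).prodMk ((hq.sub hpow).prodMk
        ((hlin x.2.2).div_const (2 * (k : ℝ) + 1)).neg)).congr_deriv ?_
      simp
    exact hline.unique (h1.add h2)
  have hinj : Function.Injective (L : R3 →ₗ[ℝ] R3) := by
    rw [injective_iff_map_eq_zero]
    rintro ⟨p, q, r⟩ hx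
    have hk' : (2 * (k : ℝ) + 1) ≠ 0 := by positivity
    rw [ContinuousLinearMap.coe_coe, hL, hf.deriv_u] at hx
    simp only [Prod.smul_mk, smul_eq_mul, Prod.mk_add_mk, Prod.mk_eq_zero] at hx
    obtain ⟨h1, h2, h3⟩ := hx
    have hp : p = 0 := by
      have : p * w1 u0 = 0 := by linear_combination h2 - h1
      exact (mul_eq_zero.mp this).resolve_right hw
    subst hp
    have hq : q = 0 := by linear_combination 4 * h1
    have hr : r = 0 := by
      have : r / (2 * (k : ℝ) + 1) = 0 := by linear_combination -h3
      exact (div_eq_zero_iff.mp this).resolve_right hk'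
    simp [hq, hr]
  refine ⟨(LinearEquiv.ofInjectiveEndo (L : R3 →ₗ[ℝ] R3) hinj).toContinuousLinearEquiv, ?_⟩
  exact hd.congr_fderiv (ContinuousLinearMap.ext fun x => rfl)

/-- existence of (2,2k+1)-cuspidal edges for every positive integer k. -/
theorem existence_2_2k1_cuspidal_edges
    (k : ℕ) (hk : 1 ≤ k)
    (f : R2 → R3) (g1 w1 : ℝ → ℝ)
    (hf : IsGTMS f g1 (fun v => v ^ (2 * k - 1)) w1 (fun v => v))
    (hw10 : w1 0 ≠ 0) :
    ∀ u0 : ℝ, w1 u0 ≠ 0 →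
      AEquiv f (u0, 0) (fun q => (q.1, q.2 ^ 2, q.2 ^ (2 * k + 1))) (0, 0) := by
  intro u0 hw
  obtain ⟨e, he⟩ := exists_hasFDerivAt_edgeStraightening hk hf hw
  obtain ⟨Ψ, hΨ, hinv⟩ :=
    exists_isLocalDiffeoAt_leftInverse (contDiff_edgeStraightening k hf.smooth_f u0) he
  have hbase : edgeStraightening k f u0 0 = f (u0, 0) := by
    simp [edgeStraightening, cuspidalPart_zero hk]
  have hfac : ∀ x : R2, f x =
      edgeStraightening k f u0 (x.1 - u0, x.2 ^ 2, x.2 ^ (2 * k + 1)) := fun x => by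
    rw [edgeStraightening, add_sub_cancel]
    exact hf.eq_add_cuspidalPart hk x.1 x.2
  rw [hbase] at hΨ
  refine ⟨fun x => x - (u0, 0), Ψ, isLocalDiffeoAt_sub_const _ _, sub_self _, hΨ, ?_, ?_⟩
  · rw [← hbase, hinv.self_of_nhds]
    simp [Prod.zero_eq_mk]
  · have hc : Continuous fun x : R2 => ((x.1 - u0, x.2 ^ 2, x.2 ^ (2 * k + 1)) : R3) := by
      fun_prop
    have ht := hc.tendsto (u0, 0)
    simp only [sub_self, ne_eq, OfNat.ofNat_ne_zero, not_false_eq_true, zero_pow,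
      Nat.add_eq_zero_iff, one_ne_zero, and_false] at ht
    filter_upwards [ht.eventually hinv] with x hx
    rw [hfac x, hx]
    simp
end
end
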